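/- Suppose α > β > 0. If I_2(α,β) < 1, then Pr_{(σ,ℋ)∼HSBM(n,p,q;k)}(σ̂_trunc(ℋ) ∉ {σ, −σ}) = 1 − o(1) as n → ∞. On the other hand, if I_2(α,β) > 1, then Pr_{(σ,ℋ)∼HSBM(n,p,q;k)}(σ̂_trunc(ℋ) ∈ {σ, −σ}) = 1 − o(1). -/

import Mathlib

open Finset Filter Matrix

open scoped Classical

/-- The `k`-element subsets of `[n]`, i.e. the potential hyperedges. -/
abbrev KSet (n k : ℕ) := {e : Finset (Fin n) // e.card = k}

/-- A `±1` label vector (encoded by `Bool`) is balanced if it has equally many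
`+1`'s (`true`) and `-1`'s (`false`). -/
abbrev balanced {n : ℕ} (σ : Fin n → Bool) : Prop :=
  2 * (Finset.univ.filter (fun i => σ i = true)).card = n

/-- `e` is in-cluster w.r.t. `σ`: `σ` is constant on `e`. -/
abbrev inCluster {n : ℕ} (σ : Fin n → Bool) (e : Finset (Fin n)) : Prop :=
  ∀ i ∈ e, ∀ j ∈ e, σ i = σ j

/-- Probability that `e` appears as an edge, given the labels `σ`. -/
noncomputable def edgeP {n : ℕ} (p q : ℝ) (σ : Fin n → Bool) (e : Finset (Fin n)) : ℝ :=
  if inCluster σ e then p else q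

/-- Probability of observing exactly the hypergraph with edge-indicator `E`, given labels `σ`
(edges appear independently). -/
noncomputable def hypProb {n k : ℕ} (p q : ℝ) (σ : Fin n → Bool) (E : KSet n k → Bool) : ℝ :=
  ∏ e : KSet n k, if E e then edgeP p q σ e.1 else 1 - edgeP p q σ e.1

/-- Uniform prior on balanced label vectors. -/
noncomputable def sigProb (n : ℕ) (σ : Fin n → Bool) : ℝ :=
  if balanced σ then 1 / ((Finset.univ.filter (fun τ : Fin n → Bool => balanced τ)).card : ℝ)
  else 0

/-- Probability of an event `P` under the joint law `HSBM(n,p,q;k)` of `(σ, ℋ)`. -/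
noncomputable def prEvent (n k : ℕ) (p q : ℝ)
    (P : (Fin n → Bool) → (KSet n k → Bool) → Prop) : ℝ :=
  ∑ σ : Fin n → Bool, ∑ E : KSet n k → Bool,
    sigProb n σ * hypProb p q σ E * (if P σ E then 1 else 0)

/-- Global sign flip. -/
def negB {n : ℕ} (σ : Fin n → Bool) : Fin n → Bool := fun i => !(σ i)

/-- The edge probability parameter `α · log n / C(n-1, k-1)`. -/
noncomputable def pParam (k : ℕ) (α : ℝ) (n : ℕ) : ℝ :=
  α * Real.log n / ((n - 1).choose (k - 1) : ℝ)

/-- The real `±1` vector associated to a Boolean label vector. -/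
def sgn {n : ℕ} (σ : Fin n → Bool) : Fin n → ℝ := fun i => if σ i then 1 else -1

/-- The rank-one matrix `σσᵀ`. -/
noncomputable def outer {n : ℕ} (σ : Fin n → Bool) : Matrix (Fin n) (Fin n) ℝ :=
  Matrix.of fun i j => sgn σ i * sgn σ j

/-- The weighted adjacency matrix `W(H)`: `W i j` is the number of hyperedges containing
both `i` and `j` (zero on the diagonal). -/
noncomputable def Wmat {n k : ℕ} (E : KSet n k → Bool) : Matrix (Fin n) (Fin n) ℝ :=
  Matrix.of fun i j => if i = j then 0 else
    ((Finset.univ.filter (fun e : KSet n k => E e = true ∧ i ∈ e.1 ∧ j ∈ e.1)).card : ℝ)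

/-- Feasibility for the SDP relaxation: `X ⪰ 0`, unit diagonal, `⟨X, 𝟙𝟙ᵀ⟩ = 0`. -/
def sdpFeasible {n : ℕ} (X : Matrix (Fin n) (Fin n) ℝ) : Prop :=
  X.PosSemidef ∧ (∀ i, X i i = 1) ∧ (∑ i, ∑ j, X i j) = 0

/-- The SDP objective `⟨W, X⟩`. -/
noncomputable def sdpObj {n : ℕ} (W X : Matrix (Fin n) (Fin n) ℝ) : ℝ :=
  ∑ i, ∑ j, W i j * X i j

/-- `Xs` is the unique optimal solution of the SDP with input `W`. -/
def sdpUniqueOpt {n : ℕ} (W Xs : Matrix (Fin n) (Fin n) ℝ) : Prop :=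
  sdpFeasible Xs ∧ ∀ X, sdpFeasible X → X ≠ Xs → sdpObj W X < sdpObj W Xs

/-- `Γ = diag(σ) W diag(σ)`. -/
noncomputable def GammaM {n : ℕ} (σ : Fin n → Bool) (W : Matrix (Fin n) (Fin n) ℝ) :
    Matrix (Fin n) (Fin n) ℝ :=
  Matrix.diagonal (sgn σ) * W * Matrix.diagonal (sgn σ)

/-- The Laplacian `L_Γ = diag(Γ𝟙) - Γ`. -/
noncomputable def LGamma {n : ℕ} (σ : Fin n → Bool) (W : Matrix (Fin n) (Fin n) ℝ) :
    Matrix (Fin n) (Fin n) ℝ :=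
  Matrix.diagonal (fun i => ∑ j, GammaM σ W i j) - GammaM σ W

/-- `Π = I - (1/n)𝟙𝟙ᵀ - (1/n)σσᵀ`, the projector onto `span{𝟙, σ}ᗮ`. -/
noncomputable def PiM {n : ℕ} (σ : Fin n → Bool) : Matrix (Fin n) (Fin n) ℝ :=
  1 - (n : ℝ)⁻¹ • Matrix.of (fun _ _ => (1 : ℝ)) - (n : ℝ)⁻¹ • outer σ

/-- The third-smallest eigenvalue of a symmetric matrix, via the Courant–Fischer
max–min characterization over subspaces of dimension `n - 2`. -/
noncomputable def lambda3 {n : ℕ} (M : Matrix (Fin n) (Fin n) ℝ) : ℝ :=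
  sSup {r : ℝ | ∃ V : Submodule ℝ (Fin n → ℝ), Module.finrank ℝ V = n - 2 ∧
    ∀ x ∈ V, r * (∑ i, x i ^ 2) ≤ x ⬝ᵥ M.mulVec x}

/-- The min-bisection objective `∑_{i<j} W_{ij} x_i x_j`. -/
noncomputable def truncObj {n k : ℕ} (E : KSet n k → Bool) (x : Fin n → Bool) : ℝ :=
  ∑ i : Fin n, ∑ j : Fin n, if i < j then Wmat E i j * sgn x i * sgn x j else 0

/-- `est` is a truncated-ML estimator: for every observed hypergraph it returns a balanced
label vector maximizing `∑_{i<j} W_{ij} x_i x_j` over balanced label vectors. -/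
def isTruncMax {n k : ℕ} (est : (KSet n k → Bool) → (Fin n → Bool)) : Prop :=
  ∀ E : KSet n k → Bool, balanced (est E) ∧
    ∀ x : Fin n → Bool, balanced x → truncObj E x ≤ truncObj E (est E)

/-- The quantity `I₂(α,β)` (a maximum over `t ≥ 0`, expressed as a supremum). -/
noncomputable def I2def (k : ℕ) (α β : ℝ) : ℝ :=
  sSup {y : ℝ | ∃ t : ℝ, 0 ≤ t ∧
    y = (1 / 2 ^ (k - 1)) * (α * (1 - Real.exp (-(((k : ℝ) - 1) * t))) +
      β * ∑ a ∈ Finset.Icc 1 (k - 1),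
        ((k - 1).choose a : ℝ) * (1 - Real.exp (-(((k : ℝ) - 1 - 2 * (a : ℝ)) * t))))}

/-!
Given `σ`, the edges of `ℋ` are independent, and `truncObj ℋ σ - truncObj ℋ x` is twice a sum of
fixed weights over the edges present. When `x` is obtained by switching a few vertices `v`, almost
all of the edges involved contain exactly one of them, so the sum nearly splits over the `v`, and
the weight of an edge of size `k` with `a` vertices opposite to `v` is `k - 1 - 2 * a`. Minus the
logarithm of the Laplace transform at `t` of the contribution of one vertex is asymptotically
`limitExponent k α β t * log n`, and the supremum of `limitExponent` over `t ≥ 0` is `I₂(α,β)`.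

If `I₂ > 1`, Chernoff's bound gives `x` at distance `d` from `σ` probability at most
`n ^ (-(1 + δ) * d)` of beating `σ` when `d ≤ ε * n`, and `exp (-c * n * log n)` when `d` is larger
(up to replacing `x` by `-x`); a union bound over `x` concludes.

If `I₂ < 1`, choose about `n ^ (1 - δ / 2)` vertices on each side. The contributions to the gains
that come from edges with only one of these vertices are independent, and by exponential tilting
each is negative with probability at least `n ^ (-(1 - δ))`. So on each side some chosen vertex
prefers to switch. With high probability no edge joins these two vertices to other chosen ones,
and exchanging their labels then gives a balanced vector that beats `σ`.
-/

/-! ### Independent Bernoulli families -/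

section Bernoulli

variable {ι κ : Type*} [Fintype ι]

/-- The probability of the outcome `E` when the coordinates are independent and coordinate `e` is
`true` with probability `w e`. -/
noncomputable def bernoulliWeight (w : ι → ℝ) (E : ι → Bool) : ℝ :=
  ∏ e, if E e then w e else 1 - w e

/-- Expectation under the product of the Bernoulli laws of parameters `w`, as a finite sum. -/
noncomputable def bernoulliExp (w : ι → ℝ) (f : (ι → Bool) → ℝ) : ℝ :=
  ∑ E, bernoulliWeight w E * f E

/-- Probability of an event under the product of the Bernoulli laws of parameters `w`. -/
noncomputable def bernoulliProb (w : ι → ℝ) (P : (ι → Bool) → Prop) : ℝ :=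
  bernoulliExp w fun E => if P E then 1 else 0

lemma bernoulliExp_prod (w : ι → ℝ) (g : ι → Bool → ℝ) :
    bernoulliExp w (fun E => ∏ e, g e (E e)) =
      ∏ e, (w e * g e true + (1 - w e) * g e false) := by
  have h := prod_univ_sum (fun _ : ι => (univ : Finset Bool))
    (fun e b => (if b then w e else 1 - w e) * g e b)
  simp only [Fintype.sum_bool, Fintype.piFinset_univ, if_true] at h
  simp only [bernoulliExp, bernoulliWeight, ← prod_mul_distrib, ← h]
  simp

lemma bernoulliExp_one (w : ι → ℝ) : bernoulliExp w (fun _ => 1) = 1 := by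
  simpa using bernoulliExp_prod w (fun _ _ => 1)

lemma bernoulliExp_sum (w : ι → ℝ) (s : Finset κ) (f : κ → (ι → Bool) → ℝ) :
    bernoulliExp w (fun E => ∑ i ∈ s, f i E) = ∑ i ∈ s, bernoulliExp w (f i) := by
  simp only [bernoulliExp, mul_sum]
  exact sum_comm

lemma bernoulliExp_sub (w : ι → ℝ) (f g : (ι → Bool) → ℝ) :
    bernoulliExp w (fun E => f E - g E) = bernoulliExp w f - bernoulliExp w g := by
  simp only [bernoulliExp, mul_sub, sum_sub_distrib]

lemma bernoulliExp_const_mul (w : ι → ℝ) (c : ℝ) (f : (ι → Bool) → ℝ) :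
    bernoulliExp w (fun E => c * f E) = c * bernoulliExp w f := by
  simp only [bernoulliExp, mul_sum, mul_left_comm]

lemma bernoulliExp_const (w : ι → ℝ) (c : ℝ) : bernoulliExp w (fun _ => c) = c := by
  simpa [bernoulliExp_one] using bernoulliExp_const_mul w c fun _ => 1

lemma bernoulliExp_one_sub (w : ι → ℝ) (f : (ι → Bool) → ℝ) :
    bernoulliExp w (fun E => 1 - f E) = 1 - bernoulliExp w f := by
  rw [bernoulliExp_sub, bernoulliExp_one]

lemma bernoulliProb_not (w : ι → ℝ) (P : (ι → Bool) → Prop) :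
    bernoulliProb w (fun E => ¬P E) = 1 - bernoulliProb w P := by
  rw [bernoulliProb, bernoulliProb, ← bernoulliExp_one_sub]
  congr 1
  funext E
  by_cases h : P E <;> simp [h]

lemma bernoulliProb_coord (w : ι → ℝ) (e : ι) : bernoulliProb w (fun E => E e = true) = w e := by
  have h := bernoulliExp_prod w (fun e' b => if e' = e then (if b = true then 1 else 0) else 1)
  rw [prod_eq_single e (fun b _ hb => by simp [hb]) (by simp)] at h
  unfold bernoulliProb
  convert h using 3 <;> simp

/-- The swap of the coordinates in `S` preserves the product of two copies of the law. -/
lemma bernoulliExp_bernoulliExp_piecewise (w : ι → ℝ) (S : Set ι) (f : (ι → Bool) → ℝ) :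
    bernoulliExp w (fun E => bernoulliExp w fun E' => f (S.piecewise E E')) =
      bernoulliExp w f := by
  have hswap : Function.Involutive fun P : (ι → Bool) × (ι → Bool) =>
      (S.piecewise P.1 P.2, S.piecewise P.2 P.1) := by
    rintro ⟨E, E'⟩
    ext e <;> by_cases h : e ∈ S <;> simp [h]
  have hw : ∀ E E', bernoulliWeight w E * bernoulliWeight w E' =
      bernoulliWeight w (S.piecewise E E') * bernoulliWeight w (S.piecewise E' E) := by
    intro E E'
    simp only [bernoulliWeight, ← prod_mul_distrib]
    refine prod_congr rfl fun e _ => ?_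
    by_cases h : e ∈ S <;> simp [h, mul_comm]
  calc bernoulliExp w (fun E => bernoulliExp w fun E' => f (S.piecewise E E'))
      = ∑ P : (ι → Bool) × (ι → Bool), bernoulliWeight w (S.piecewise P.1 P.2) *
          bernoulliWeight w (S.piecewise P.2 P.1) * f (S.piecewise P.1 P.2) := by
        simp only [bernoulliExp, Fintype.sum_prod_type, mul_sum, ← hw, mul_assoc]
    _ = ∑ P : (ι → Bool) × (ι → Bool), bernoulliWeight w P.1 * bernoulliWeight w P.2 * f P.1 :=
        Equiv.sum_comp hswap.toPerm fun P => bernoulliWeight w P.1 * bernoulliWeight w P.2 * f P.1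
    _ = bernoulliExp w fun E => bernoulliExp w fun _ => f E := by
        simp only [bernoulliExp, Fintype.sum_prod_type, mul_sum, mul_assoc]
    _ = bernoulliExp w f := by simp only [bernoulliExp_const]

lemma bernoulliExp_mul_of_dependsOn (w : ι → ℝ) {S : Set ι} {f g : (ι → Bool) → ℝ}
    (hf : DependsOn f S) (hg : DependsOn g Sᶜ) :
    bernoulliExp w (fun E => f E * g E) = bernoulliExp w f * bernoulliExp w g := by
  have hfg : ∀ E E', f (S.piecewise E E') * g (S.piecewise E E') = f E * g E' := by
    intro E E'
    rw [hf fun e he => Set.piecewise_eq_of_mem S E E' he,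
      hg fun e he => Set.piecewise_eq_of_notMem S E E' he]
  rw [← bernoulliExp_bernoulliExp_piecewise w S]
  simp only [hfg, bernoulliExp_const_mul]
  simp only [mul_comm _ (bernoulliExp w g), bernoulliExp_const_mul]

lemma bernoulliExp_prod_of_dependsOn (w : ι → ℝ) (s : Finset κ) {S : κ → Set ι}
    {f : κ → (ι → Bool) → ℝ} (hS : (s : Set κ).PairwiseDisjoint S)
    (hf : ∀ i ∈ s, DependsOn (f i) (S i)) :
    bernoulliExp w (fun E => ∏ i ∈ s, f i E) = ∏ i ∈ s, bernoulliExp w (f i) := by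
  induction s using Finset.induction_on with
  | empty => simpa using bernoulliExp_one w
  | insert a s ha ih =>
    rw [coe_insert, Set.pairwiseDisjoint_insert_of_notMem (by simpa using ha)] at hS
    rw [forall_mem_insert] at hf
    simp only [prod_insert ha]
    rw [bernoulliExp_mul_of_dependsOn w hf.1, ih hS.1 hf.2]
    intro E E' h
    exact prod_congr rfl fun i hi => hf.2 i hi fun e he =>
      h e fun hea => Set.disjoint_left.1 (hS.2 i hi) hea he

variable {w : ι → ℝ}

lemma bernoulliWeight_nonneg (hw : ∀ e, w e ∈ Set.Icc (0 : ℝ) 1) (E : ι → Bool) :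
    0 ≤ bernoulliWeight w E :=
  prod_nonneg fun e _ => by split_ifs <;> linarith [(hw e).1, (hw e).2]

lemma bernoulliExp_mono (hw : ∀ e, w e ∈ Set.Icc (0 : ℝ) 1) {f g : (ι → Bool) → ℝ}
    (h : ∀ E, f E ≤ g E) : bernoulliExp w f ≤ bernoulliExp w g :=
  sum_le_sum fun E _ => mul_le_mul_of_nonneg_left (h E) (bernoulliWeight_nonneg hw E)

lemma bernoulliProb_mono (hw : ∀ e, w e ∈ Set.Icc (0 : ℝ) 1) {P Q : (ι → Bool) → Prop}
    (h : ∀ E, P E → Q E) : bernoulliProb w P ≤ bernoulliProb w Q :=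
  bernoulliExp_mono hw fun E => by
    split_ifs with hP hQ hQ
    exacts [le_rfl, absurd (h E hP) hQ, zero_le_one, le_rfl]

lemma bernoulliProb_nonneg (hw : ∀ e, w e ∈ Set.Icc (0 : ℝ) 1) (P : (ι → Bool) → Prop) :
    0 ≤ bernoulliProb w P := by
  rw [← bernoulliExp_const w 0]
  exact bernoulliExp_mono hw fun E => by split_ifs <;> norm_num

lemma bernoulliProb_le_one (hw : ∀ e, w e ∈ Set.Icc (0 : ℝ) 1) (P : (ι → Bool) → Prop) :
    bernoulliProb w P ≤ 1 := by
  rw [← bernoulliExp_one w]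
  exact bernoulliExp_mono hw fun E => by split_ifs <;> norm_num

lemma one_sub_sum_bernoulliProb_le (hw : ∀ e, w e ∈ Set.Icc (0 : ℝ) 1) (s : Finset κ)
    {P : κ → (ι → Bool) → Prop} {Q : (ι → Bool) → Prop}
    (h : ∀ E, (∀ i ∈ s, ¬P i E) → Q E) :
    1 - ∑ i ∈ s, bernoulliProb w (P i) ≤ bernoulliProb w Q := by
  simp only [bernoulliProb]
  rw [← bernoulliExp_sum, ← bernoulliExp_one_sub]
  refine bernoulliExp_mono hw fun E => ?_
  have hnn : ∀ i ∈ s, (0 : ℝ) ≤ if P i E then 1 else 0 := fun i _ => by split_ifs <;> norm_num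
  split_ifs with hQ
  · linarith [sum_nonneg hnn]
  · obtain ⟨i, hi, hPi⟩ : ∃ i ∈ s, P i E := by
      by_contra! hP
      exact hQ (h E hP)
    have := single_le_sum hnn hi
    rw [if_pos hPi] at this
    linarith

lemma bernoulliProb_add_sub_one_le (hw : ∀ e, w e ∈ Set.Icc (0 : ℝ) 1)
    (P Q : (ι → Bool) → Prop) :
    bernoulliProb w P + bernoulliProb w Q - 1 ≤ bernoulliProb w fun E => P E ∧ Q E := by
  have h := one_sub_sum_bernoulliProb_le hw (univ : Finset Bool)
    (P := fun b E => ¬if b then P E else Q E) (Q := fun E => P E ∧ Q E) fun E hE =>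
      ⟨by simpa using hE true (mem_univ _), by simpa using hE false (mem_univ _)⟩
  simp only [bernoulliProb_not, Fintype.sum_bool, if_true, Bool.false_eq_true, if_false] at h
  linarith

lemma mul_bernoulliProb_exists_le (hw : ∀ e, w e ∈ Set.Icc (0 : ℝ) 1) {s : Set κ} {S : Set ι}
    {G C : κ → (ι → Bool) → Prop} {c : ℝ} (hG : ∀ p ∈ s, DependsOn (G p) S)
    (hC : ∀ p ∈ s, DependsOn (C p) Sᶜ) (hc : ∀ p ∈ s, c ≤ bernoulliProb w (C p)) :
    c * bernoulliProb w (fun E => ∃ p ∈ s, G p E) ≤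
      bernoulliProb w (fun E => ∃ p ∈ s, G p E ∧ C p E) := by
  rw [bernoulliProb, bernoulliProb, ← bernoulliExp_const_mul,
    ← bernoulliExp_bernoulliExp_piecewise w S fun E => if ∃ p ∈ s, G p E ∧ C p E then 1 else 0]
  refine bernoulliExp_mono hw fun E => ?_
  split_ifs with hE
  · obtain ⟨p, hp, hGp⟩ := hE
    rw [mul_one]
    refine (hc p hp).trans (bernoulliProb_mono hw fun E' hCp => ⟨p, hp, ?_, ?_⟩)
    · rwa [hG p hp fun e he => Set.piecewise_eq_of_mem S E E' he]
    · rwa [hC p hp fun e he => Set.piecewise_eq_of_notMem S E E' he]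
  · rw [mul_zero]
    exact bernoulliProb_nonneg hw _

lemma bernoulliProb_forall_not_le_exp (hw : ∀ e, w e ∈ Set.Icc (0 : ℝ) 1) (s : Finset κ)
    {S : κ → Set ι} {G : κ → (ι → Bool) → Prop} {π : ℝ} (hS : (s : Set κ).PairwiseDisjoint S)
    (hG : ∀ i ∈ s, DependsOn (G i) (S i)) (hπ : ∀ i ∈ s, π ≤ bernoulliProb w (G i)) :
    bernoulliProb w (fun E => ∀ i ∈ s, ¬G i E) ≤ Real.exp (-(#s * π)) := by
  have hprod : bernoulliProb w (fun E => ∀ i ∈ s, ¬G i E) =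
      ∏ i ∈ s, bernoulliProb w (fun E => ¬G i E) := by
    simp only [bernoulliProb]
    rw [← bernoulliExp_prod_of_dependsOn w s hS]
    · refine congrArg _ (funext fun E => ?_)
      by_cases hE : ∀ i ∈ s, ¬G i E
      · exact (if_pos hE).trans (prod_eq_one fun i hi => if_pos (hE i hi)).symm
      · push Not at hE
        obtain ⟨i, hi, hGi⟩ := hE
        rw [if_neg fun h => h i hi hGi, prod_eq_zero hi (if_neg (not_not.2 hGi))]
    · intro i hi E E' h
      simp [hG i hi h]
  calc bernoulliProb w (fun E => ∀ i ∈ s, ¬G i E)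
      = ∏ i ∈ s, bernoulliProb w (fun E => ¬G i E) := hprod
    _ ≤ ∏ _i ∈ s, Real.exp (-π) := prod_le_prod (fun i _ => bernoulliProb_nonneg hw _)
        fun i hi => by
          rw [bernoulliProb_not]
          linarith [hπ i hi, Real.add_one_le_exp (-π)]
    _ = Real.exp (-(#s * π)) := by rw [prod_const, ← Real.exp_nat_mul, mul_neg]

/-- The sum of the weights `c e` over the coordinates `e` at which `E` is `true`. -/
noncomputable def weightedCount (c : ι → ℝ) (E : ι → Bool) : ℝ := ∑ e, if E e then c e else 0

/-- The Poissonian approximation `∑ w e (1 - exp (-t (c e)))` of minus the logarithm of the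
Laplace transform of `weightedCount c` at `t`. -/
noncomputable def chernoffExponent (w c : ι → ℝ) (t : ℝ) : ℝ :=
  ∑ e, w e * (1 - Real.exp (-(t * c e)))

lemma bernoulliExp_exp_weightedCount (w c : ι → ℝ) (t : ℝ) :
    bernoulliExp w (fun E => Real.exp (-(t * weightedCount c E))) =
      ∏ e, (1 - w e * (1 - Real.exp (-(t * c e)))) := by
  have hE : ∀ E : ι → Bool, Real.exp (-(t * weightedCount c E)) =
      ∏ e, Real.exp (-(t * if E e then c e else 0)) := fun E => by
    rw [← Real.exp_sum, weightedCount, mul_sum, sum_neg_distrib]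
  simp only [hE]
  rw [bernoulliExp_prod w fun e b => Real.exp (-(t * if b then c e else 0))]
  refine prod_congr rfl fun e _ => ?_
  simp only [if_true, Bool.false_eq_true, if_false, mul_zero, neg_zero, Real.exp_zero]
  ring

lemma bernoulliExp_exp_weightedCount_le (hw : ∀ e, w e ∈ Set.Icc (0 : ℝ) 1) (c : ι → ℝ) (t : ℝ) :
    bernoulliExp w (fun E => Real.exp (-(t * weightedCount c E))) ≤
      Real.exp (-chernoffExponent w c t) := by
  rw [bernoulliExp_exp_weightedCount, chernoffExponent, ← sum_neg_distrib, Real.exp_sum]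
  refine prod_le_prod (fun e _ => ?_) (fun e _ => ?_)
  · nlinarith [(hw e).2, mul_nonneg (hw e).1 (Real.exp_pos (-(t * c e))).le]
  · linarith [Real.add_one_le_exp (-(w e * (1 - Real.exp (-(t * c e)))))]

lemma exp_neg_sub_two_mul_sq_le_one_sub {x : ℝ} (hx : |x| ≤ 1 / 2) :
    Real.exp (-x - 2 * x ^ 2) ≤ 1 - x := by
  obtain ⟨-, hx2⟩ := abs_le.1 hx
  have h1 : 0 < 1 - x := by linarith
  have hdiv : x / (1 - x) ≤ x + 2 * x ^ 2 := by
    rw [div_le_iff₀ h1]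
    nlinarith [mul_nonneg (sq_nonneg x) (by linarith : 0 ≤ 1 - 2 * x)]
  have hinv : (1 - x)⁻¹ ≤ Real.exp (x + 2 * x ^ 2) :=
    calc (1 - x)⁻¹ = x / (1 - x) + 1 := by field_simp; ring
      _ ≤ Real.exp (x / (1 - x)) := Real.add_one_le_exp _
      _ ≤ Real.exp (x + 2 * x ^ 2) := Real.exp_le_exp.2 hdiv
  rw [show -x - 2 * x ^ 2 = -(x + 2 * x ^ 2) by ring, Real.exp_neg]
  exact inv_le_of_inv_le₀ h1 hinv

lemma exp_le_bernoulliExp_exp_weightedCount (w c : ι → ℝ) (t : ℝ)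
    (h : ∀ e, |w e * (1 - Real.exp (-(t * c e)))| ≤ 1 / 2) :
    Real.exp (-chernoffExponent w c t - 2 * ∑ e, (w e * (1 - Real.exp (-(t * c e)))) ^ 2) ≤
      bernoulliExp w (fun E => Real.exp (-(t * weightedCount c E))) := by
  rw [bernoulliExp_exp_weightedCount, chernoffExponent, ← sum_neg_distrib, mul_sum,
    ← sum_sub_distrib, Real.exp_sum]
  exact prod_le_prod (fun e _ => (Real.exp_pos _).le)
    fun e _ => exp_neg_sub_two_mul_sq_le_one_sub (h e)

lemma bernoulliProb_weightedCount_nonpos_le (hw : ∀ e, w e ∈ Set.Icc (0 : ℝ) 1) (c : ι → ℝ)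
    {t : ℝ} (ht : 0 ≤ t) :
    bernoulliProb w (fun E => weightedCount c E ≤ 0) ≤ Real.exp (-chernoffExponent w c t) := by
  refine (bernoulliExp_mono hw fun E => ?_).trans (bernoulliExp_exp_weightedCount_le hw c t)
  split_ifs with h
  · rw [Real.one_le_exp_iff]
    nlinarith
  · exact (Real.exp_pos _).le

/-- For `x < -η` the last term in the parenthesis exceeds `1`, and for `0 ≤ x` the middle one
does. -/
lemma exp_mul_sub_le_ite_neg {t s η : ℝ} (ht : 0 ≤ t) (hs : 0 ≤ s) (x : ℝ) :
    Real.exp (-(t * η)) * (Real.exp (-(t * x)) - Real.exp (-((t - s) * x)) -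
      Real.exp (-(s * η)) * Real.exp (-((t + s) * x))) ≤ if x < 0 then 1 else 0 := by
  have hfactor : Real.exp (-(t * η)) * (Real.exp (-(t * x)) - Real.exp (-((t - s) * x)) -
      Real.exp (-(s * η)) * Real.exp (-((t + s) * x))) =
      Real.exp (-(t * (x + η))) * (1 - Real.exp (s * x) - Real.exp (-(s * (x + η)))) := by
    simp only [mul_sub, mul_one, ← Real.exp_add]
    ring_nf
  rw [hfactor]
  have h0 := (Real.exp_pos (-(t * (x + η)))).le
  have h1 := Real.exp_pos (s * x)
  have h2 := Real.exp_pos (-(s * (x + η)))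
  split_ifs with hx
  · rcases lt_or_ge (x + η) 0 with hη | hη
    · have : 1 ≤ Real.exp (-(s * (x + η))) := by
        rw [Real.one_le_exp_iff]
        nlinarith
      linarith [mul_nonpos_of_nonneg_of_nonpos h0
        (by linarith : 1 - Real.exp (s * x) - Real.exp (-(s * (x + η))) ≤ 0)]
    · exact (mul_le_of_le_one_right h0 (by linarith)).trans (Real.exp_le_one_iff.2 (by nlinarith))
  · have : 1 ≤ Real.exp (s * x) := by
      rw [Real.one_le_exp_iff]
      nlinarith
    exact mul_nonpos_of_nonneg_of_nonpos h0 (by linarith)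

lemma le_bernoulliProb_weightedCount_neg (hw : ∀ e, w e ∈ Set.Icc (0 : ℝ) 1) (c : ι → ℝ)
    {t s η : ℝ} (ht : 0 ≤ t) (hs : 0 ≤ s) :
    Real.exp (-(t * η)) * (bernoulliExp w (fun E => Real.exp (-(t * weightedCount c E))) -
      bernoulliExp w (fun E => Real.exp (-((t - s) * weightedCount c E))) -
      Real.exp (-(s * η)) * bernoulliExp w (fun E => Real.exp (-((t + s) * weightedCount c E)))) ≤
    bernoulliProb w (fun E => weightedCount c E < 0) := by
  simp only [← bernoulliExp_const_mul, ← bernoulliExp_sub, bernoulliProb]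
  refine bernoulliExp_mono hw fun E => ?_
  convert exp_mul_sub_le_ite_neg ht hs (weightedCount c E)

end Bernoulli

/-! ### The bisection objective as a weighted edge count -/

section Objective

variable {n k : ℕ}

lemma sum_sum_ite_lt_mul {ι : Type*} [Fintype ι] [LinearOrder ι] (f : ι → ℝ) :
    (∑ i, ∑ j, if i < j then f i * f j else 0) = ((∑ i, f i) ^ 2 - ∑ i, f i ^ 2) / 2 := by
  have hsplit : ∀ i j, f i * f j = (if i < j then f i * f j else 0) +
      (if j < i then f j * f i else 0) + if i = j then f i ^ 2 else 0 := by
    intro i j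
    rcases lt_trichotomy i j with h | rfl | h
    · simp [h, h.not_gt, h.ne]
    · simp [sq]
    · simp [h, h.not_gt, h.ne', mul_comm]
  have hsq : (∑ i, f i) ^ 2 = (∑ i, ∑ j, if i < j then f i * f j else 0) +
      (∑ i, ∑ j, if j < i then f j * f i else 0) + ∑ i, f i ^ 2 := by
    rw [sq, sum_mul_sum, sum_congr rfl fun i _ => sum_congr rfl fun j _ => hsplit i j]
    simp [sum_add_distrib]
  rw [sum_comm (f := fun i j => if j < i then f j * f i else 0)] at hsq
  rw [hsq]
  ring

/-- The sum of the `±1` labels over `e`. -/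
noncomputable def labelSum (x : Fin n → Bool) (e : Finset (Fin n)) : ℝ := ∑ i ∈ e, sgn x i

lemma sgn_sq (x : Fin n → Bool) (i : Fin n) : sgn x i ^ 2 = 1 := by
  unfold sgn
  split_ifs <;> norm_num

lemma abs_sgn (x : Fin n → Bool) (i : Fin n) : |sgn x i| = 1 := by
  unfold sgn
  split_ifs <;> simp

lemma sgn_negB (x : Fin n → Bool) (i : Fin n) : sgn (negB x) i = -sgn x i := by
  unfold sgn negB
  cases x i <;> simp

lemma sgn_mul_sgn (σ : Fin n → Bool) (v j : Fin n) :
    sgn σ v * sgn σ j = 1 - 2 * if σ j ≠ σ v then 1 else 0 := by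
  unfold sgn
  cases σ v <;> cases σ j <;> norm_num

lemma Wmat_mul_sgn_mul_sgn (E : KSet n k → Bool) (x : Fin n → Bool) {i j : Fin n} (hij : i ≠ j) :
    Wmat E i j * sgn x i * sgn x j = ∑ e : KSet n k, if E e then
      (if i ∈ e.1 then sgn x i else 0) * (if j ∈ e.1 then sgn x j else 0) else 0 := by
  simp only [Wmat, Matrix.of_apply, if_neg hij]
  rw [card_filter]
  push_cast
  rw [sum_mul, sum_mul]
  refine sum_congr rfl fun e _ => ?_
  by_cases hE : E e = true <;> by_cases hi : i ∈ e.1 <;> by_cases hj : j ∈ e.1 <;>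
    simp [hE, hi, hj]

lemma truncObj_eq_weightedCount (E : KSet n k → Bool) (x : Fin n → Bool) :
    truncObj E x = weightedCount (fun e => (labelSum x e.1 ^ 2 - k) / 2) E := by
  have hpair : ∀ i j : Fin n, (if i < j then Wmat E i j * sgn x i * sgn x j else 0) =
      ∑ e : KSet n k, if i < j then if E e then
        (if i ∈ e.1 then sgn x i else 0) * (if j ∈ e.1 then sgn x j else 0) else 0 else 0 := by
    intro i j
    split_ifs with h
    · exact Wmat_mul_sgn_mul_sgn E x h.ne
    · simp
  have hedge : ∀ e : KSet n k, (∑ i, ∑ j, if i < j then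
      (if i ∈ e.1 then sgn x i else 0) * (if j ∈ e.1 then sgn x j else 0) else 0) =
        (labelSum x e.1 ^ 2 - k) / 2 := by
    intro e
    rw [sum_sum_ite_lt_mul]
    simp [labelSum, ite_pow, sgn_sq, e.2]
  calc truncObj E x
      = ∑ i : Fin n, ∑ e : KSet n k, ∑ j : Fin n, if i < j then if E e then
        (if i ∈ e.1 then sgn x i else 0) * (if j ∈ e.1 then sgn x j else 0) else 0 else 0 := by
        simp only [truncObj, hpair]
        exact sum_congr rfl fun i _ => sum_comm
    _ = ∑ e : KSet n k, ∑ i : Fin n, ∑ j : Fin n, if i < j then if E e then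
        (if i ∈ e.1 then sgn x i else 0) * (if j ∈ e.1 then sgn x j else 0) else 0 else 0 :=
        sum_comm
    _ = weightedCount (fun e => (labelSum x e.1 ^ 2 - k) / 2) E := by
        refine sum_congr rfl fun e _ => ?_
        by_cases hE : E e = true
        · simp only [hE, if_true, hedge]
        · simp [hE]

/-- Half of the amount by which an edge `e` favours the labelling `σ` over `x` in `truncObj`. -/
noncomputable def objGap (σ x : Fin n → Bool) (e : Finset (Fin n)) : ℝ :=
  (labelSum σ e ^ 2 - labelSum x e ^ 2) / 4

lemma truncObj_sub_truncObj (E : KSet n k → Bool) (σ x : Fin n → Bool) :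
    truncObj E σ - truncObj E x =
      2 * weightedCount (fun e : KSet n k => objGap σ x e.1) E := by
  rw [truncObj_eq_weightedCount, truncObj_eq_weightedCount, weightedCount, weightedCount,
    weightedCount, ← sum_sub_distrib, mul_sum]
  refine sum_congr rfl fun e _ => ?_
  split_ifs
  · unfold objGap
    ring
  · ring

lemma labelSum_negB (x : Fin n → Bool) (e : Finset (Fin n)) :
    labelSum (negB x) e = -labelSum x e := by
  simp [labelSum, sgn_negB]

lemma objGap_negB (σ x : Fin n → Bool) (e : Finset (Fin n)) :
    objGap σ (negB x) e = objGap σ x e := by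
  rw [objGap, labelSum_negB, neg_sq, objGap]

lemma abs_labelSum_le (x : Fin n → Bool) (e : Finset (Fin n)) : |labelSum x e| ≤ #e := by
  refine (abs_sum_le_sum_abs _ _).trans ?_
  simp [abs_sgn]

lemma abs_objGap_le (σ x : Fin n → Bool) (e : Finset (Fin n)) :
    |objGap σ x e| ≤ (#e : ℝ) ^ 2 := by
  have hσ := sq_le_sq' (neg_le_of_abs_le (abs_labelSum_le σ e)) (le_of_abs_le (abs_labelSum_le σ e))
  have hx := sq_le_sq' (neg_le_of_abs_le (abs_labelSum_le x e)) (le_of_abs_le (abs_labelSum_le x e))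
  rw [objGap, abs_le]
  constructor <;> nlinarith [sq_nonneg (labelSum σ e), sq_nonneg (labelSum x e)]

/-- The number of elements of `e` that `σ` places on the side opposite to `v`. -/
noncomputable def oppositeCount (σ : Fin n → Bool) (v : Fin n) (e : Finset (Fin n)) : ℕ :=
  #{j ∈ e | σ j ≠ σ v}

lemma sgn_mul_labelSum (σ : Fin n → Bool) (v : Fin n) (e : Finset (Fin n)) :
    sgn σ v * labelSum σ e = #e - 2 * oppositeCount σ v e := by
  rw [labelSum, oppositeCount, mul_sum, sum_congr rfl fun j _ => sgn_mul_sgn σ v j,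
    sum_sub_distrib, ← mul_sum, card_filter]
  simp

lemma inCluster_iff_oppositeCount_eq_zero (σ : Fin n → Bool) {v : Fin n} {e : Finset (Fin n)}
    (hv : v ∈ e) : inCluster σ e ↔ oppositeCount σ v e = 0 := by
  rw [oppositeCount, card_eq_zero, filter_eq_empty_iff]
  refine ⟨fun h j hj => by simpa using h j hj v hv, fun h i hi j hj => ?_⟩
  rw [not_not.1 (h hi), not_not.1 (h hj)]

lemma oppositeCount_lt_card (σ : Fin n → Bool) {v : Fin n} {e : Finset (Fin n)} (hv : v ∈ e) :
    oppositeCount σ v e < #e :=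
  card_lt_card (filter_ssubset.2 ⟨v, hv, by simp⟩)

lemma objGap_eq_zero {σ x : Fin n → Bool} {e : Finset (Fin n)} (h : ∀ j ∈ e, x j = σ j) :
    objGap σ x e = 0 := by
  have : labelSum x e = labelSum σ e := sum_congr rfl fun j hj => by simp [sgn, h j hj]
  simp [objGap, this]

/-- The gain of an edge of size `k` when one of its vertices, with `a` opposite neighbours in the
edge, keeps its label instead of switching it. -/
def gain (k a : ℕ) : ℝ := k - 1 - 2 * a

lemma objGap_eq_gain {σ x : Fin n → Bool} {e : Finset (Fin n)} {v : Fin n} (hv : v ∈ e)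
    (hvx : x v ≠ σ v) (h : ∀ j ∈ e, j ≠ v → x j = σ j) :
    objGap σ x e = gain #e (oppositeCount σ v e) := by
  have hx : labelSum x e = labelSum σ e - 2 * sgn σ v := by
    have hrest : ∑ j ∈ e.erase v, sgn x j = ∑ j ∈ e.erase v, sgn σ j :=
      sum_congr rfl fun j hj => by simp [sgn, h j (mem_of_mem_erase hj) (ne_of_mem_erase hj)]
    have hflip : sgn x v = -sgn σ v := by
      unfold sgn
      cases hσ : σ v <;> simp_all
    rw [labelSum, labelSum, ← add_sum_erase _ _ hv, ← add_sum_erase _ _ hv, hrest, hflip]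
    ring
  rw [objGap, hx, gain]
  linear_combination sgn_mul_labelSum σ v e - sgn_sq σ v

lemma abs_gain_le {k a : ℕ} (ha : a < k) : |gain k a| ≤ k := by
  have : (a : ℝ) + 1 ≤ k := by exact_mod_cast ha
  rw [gain, abs_le]
  constructor <;> linarith [(a.cast_nonneg : (0 : ℝ) ≤ a)]

end Objective

/-! ### Counting edges by intersection pattern -/

section Counting

lemma card_filter_powersetCard_insert_disjUnion {α : Type*} [DecidableEq α] {v : α}
    {V U : Finset α} (hvV : v ∉ V) (hvU : v ∉ U) (hVU : Disjoint V U) {a k : ℕ} (hak : a < k) :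
    #{e ∈ powersetCard k (insert v (V ∪ U)) | v ∈ e ∧ #(e ∩ U) = a} =
      (#V).choose (k - 1 - a) * (#U).choose a := by
  rw [← card_powersetCard, ← card_powersetCard, ← card_product]
  refine card_nbij' (fun e => (e ∩ V, e ∩ U)) (fun s => insert v (s.1 ∪ s.2)) ?_ ?_ ?_ ?_
  · intro e he
    simp only [mem_coe, mem_filter, mem_powersetCard] at he
    obtain ⟨⟨heV, hek⟩, hve, hea⟩ := he
    have hcard : #e = #(e ∩ V) + #(e ∩ U) + 1 := by
      rw [← card_union_of_disjoint (hVU.mono inter_subset_right inter_subset_right),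
        ← card_insert_of_notMem (a := v) (by grind)]
      congr 1
      grind
    simp only [mem_coe, mem_product, mem_powersetCard, inter_subset_right, true_and]
    omega
  · rintro ⟨s, t⟩ hst
    simp only [mem_coe, mem_product, mem_powersetCard] at hst
    obtain ⟨⟨hsV, hs⟩, htU, ht⟩ := hst
    have hU : insert v (s ∪ t) ∩ U = t := by
      ext j
      have hj : j ∈ V → j ∉ U := fun hj => disjoint_left.1 hVU hj
      grind
    have hcard : #(insert v (s ∪ t)) = k := by
      rw [card_insert_of_notMem (by grind), card_union_of_disjoint (hVU.mono hsV htU), hs, ht]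
      omega
    simp only [mem_coe, mem_filter, mem_powersetCard, mem_insert_self, hU, ht, hcard, and_true]
    exact insert_subset_insert _ (union_subset_union hsV htU)
  · intro e he
    grind
  · rintro ⟨s, t⟩ hst
    simp only [mem_coe, mem_product, mem_powersetCard] at hst
    ext j <;> have hj : j ∈ V → j ∉ U := fun hj => disjoint_left.1 hVU hj <;> grind

lemma card_KSet_filter {n k : ℕ} (P : Finset (Fin n) → Prop) [DecidablePred P] :
    #{e : KSet n k | P e.1} = #{e ∈ powersetCard k univ | P e} := by
  refine card_nbij (fun e => e.1) ?_ (fun e _ e' _ h => Subtype.ext h) ?_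
  · intro e he
    simpa [e.2] using he
  · intro e he
    simp only [coe_filter, mem_powersetCard, subset_univ, true_and, Set.mem_ofPred_eq] at he
    exact ⟨⟨e, he.1⟩, by simpa using he.2, rfl⟩

lemma card_KSet_pair_mem {n k : ℕ} (hk : 2 ≤ k) {i j : Fin n} (hij : i ≠ j) :
    #{e : KSet n k | i ∈ e.1 ∧ j ∈ e.1} = (n - 2).choose (k - 2) := by
  have h := card_filter_powersetCard_subset {i, j} univ k (subset_univ _)
    (by rwa [card_pair hij])
  rw [card_pair hij, card_univ, Fintype.card_fin] at h
  rw [card_KSet_filter (fun e => i ∈ e ∧ j ∈ e), ← h]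
  simp only [insert_subset_iff, singleton_subset_iff]

/-- The edge `e` joins `v` to another vertex of `A`. -/
def Collides {n k : ℕ} (A : Finset (Fin n)) (v : Fin n) (e : KSet n k) : Prop :=
  v ∈ e.1 ∧ ∃ j ∈ A, j ≠ v ∧ j ∈ e.1

lemma card_collides_le {n k : ℕ} (hk : 2 ≤ k) (A : Finset (Fin n)) (v : Fin n) :
    #{e : KSet n k | Collides A v e} ≤ #A * (n - 2).choose (k - 2) :=
  calc #{e : KSet n k | Collides A v e}
      ≤ #((A.erase v).biUnion fun j => {e : KSet n k | v ∈ e.1 ∧ j ∈ e.1}) := by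
        refine card_le_card fun e he => ?_
        obtain ⟨hv, j, hj, hjv, hje⟩ := (mem_filter.1 he).2
        exact mem_biUnion.2 ⟨j, mem_erase.2 ⟨hjv, hj⟩, mem_filter.2 ⟨mem_univ _, hv, hje⟩⟩
    _ ≤ ∑ j ∈ A.erase v, #{e : KSet n k | v ∈ e.1 ∧ j ∈ e.1} := card_biUnion_le
    _ = #(A.erase v) * (n - 2).choose (k - 2) := by
        rw [sum_congr rfl fun j hj => card_KSet_pair_mem hk (ne_of_mem_erase hj).symm, sum_const,
          smul_eq_mul]
    _ ≤ #A * (n - 2).choose (k - 2) := Nat.mul_le_mul_right _ (card_le_card (erase_subset _ _))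

variable {m k : ℕ} {σ x : Fin (2 * m) → Bool}

lemma card_label_eq (hσ : balanced σ) (b : Bool) : #{i | σ i = b} = m := by
  have htrue : #{i | σ i = true} = m := by
    unfold balanced at hσ
    omega
  have hsum := card_filter_add_card_filter_not (s := univ) (fun i => σ i = true)
  rw [card_univ, Fintype.card_fin] at hsum
  cases b
  · simp only [← Bool.not_eq_true]
    omega
  · exact htrue

lemma card_label_ne (hσ : balanced σ) (b : Bool) : #{i | σ i ≠ b} = m := by
  simpa only [Bool.eq_not] using card_label_eq hσ (!b)

lemma card_KSet_oppositeCount_eq (hσ : balanced σ) (v : Fin (2 * m)) {a : ℕ} (ha : a < k) :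
    #{e : KSet (2 * m) k | v ∈ e.1 ∧ oppositeCount σ v e.1 = a} =
      (m - 1).choose (k - 1 - a) * m.choose a := by
  set V := ({i | σ i = σ v} : Finset _).erase v with hVdef
  set U : Finset (Fin (2 * m)) := {i | σ i ≠ σ v} with hUdef
  have hV : #V = m - 1 := by
    rw [card_erase_of_mem (by simp), card_label_eq hσ]
  have hU : #U = m := card_label_ne hσ _
  have huniv : insert v (V ∪ U) = univ := by
    ext i
    simp only [hVdef, hUdef, mem_insert, mem_union, mem_erase, mem_filter, mem_univ, true_and]
    tauto
  have hdisj : Disjoint V U := disjoint_left.2 fun i hi hi' =>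
    (mem_filter.1 hi').2 (mem_filter.1 (mem_of_mem_erase hi)).2
  have h := card_filter_powersetCard_insert_disjUnion (V := V) (notMem_erase v _)
    (by simp [hUdef]) hdisj ha
  rw [huniv, hV, hU] at h
  have hopp : ∀ e, oppositeCount σ v e = #(e ∩ U) := fun e => by
    simp only [oppositeCount, hUdef, inter_filter, inter_univ]
  rw [card_KSet_filter fun e => v ∈ e ∧ oppositeCount σ v e = a, ← h]
  simp only [hopp]

lemma sum_mem_oppositeCount (hσ : balanced σ) (v : Fin (2 * m)) (g : ℕ → ℝ) :
    (∑ e : KSet (2 * m) k, if v ∈ e.1 then g (oppositeCount σ v e.1) else 0) =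
      ∑ a ∈ range k, ((m - 1).choose (k - 1 - a) * m.choose a : ℕ) * g a := by
  rw [← sum_filter, ← sum_fiberwise_of_maps_to (t := range k)
    (g := fun e : KSet (2 * m) k => oppositeCount σ v e.1)]
  · refine sum_congr rfl fun a ha => ?_
    rw [filter_filter, ← card_KSet_oppositeCount_eq hσ v (mem_range.1 ha), ← nsmul_eq_mul,
      ← sum_const]
    exact sum_congr rfl fun e he => by rw [(mem_filter.1 he).2.2]
  · intro e he
    have := oppositeCount_lt_card σ (mem_filter.1 he).2
    rwa [e.2, ← mem_range] at this

lemma card_KSet_inCluster_pair_mem (hk : 2 ≤ k) (hσ : balanced σ) {i j : Fin (2 * m)}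
    (hij : i ≠ j) : #{e : KSet (2 * m) k | inCluster σ e.1 ∧ i ∈ e.1 ∧ j ∈ e.1} =
      if σ i = σ j then (m - 2).choose (k - 2) else 0 := by
  split_ifs with hs
  · have hsub : ({i, j} : Finset _) ⊆ ({l | σ l = σ i} : Finset _) := by
      simp [insert_subset_iff, hs]
    have h := card_filter_powersetCard_subset {i, j} _ k hsub (by rwa [card_pair hij])
    rw [card_pair hij, card_label_eq hσ] at h
    rw [card_KSet_filter fun e => inCluster σ e ∧ i ∈ e ∧ j ∈ e, ← h]
    congr 1
    ext e
    simp only [mem_filter, mem_powersetCard, subset_univ, true_and, insert_subset_iff,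
      singleton_subset_iff]
    refine ⟨fun ⟨hek, hc, hi, hj⟩ => ⟨⟨fun l hl => by simpa using hc l hl i hi, hek⟩, hi, hj⟩,
      fun ⟨⟨hc, hek⟩, hi, hj⟩ => ⟨hek, fun a ha b hb => ?_, hi, hj⟩⟩
    rw [(mem_filter.1 (hc ha)).2, (mem_filter.1 (hc hb)).2]
  · rw [card_eq_zero, filter_eq_empty_iff]
    rintro e _ ⟨hc, hi, hj⟩
    exact hs (hc i hi j hj)

lemma sum_edgeP_pair_mem (hk : 2 ≤ k) (p q : ℝ) (hσ : balanced σ) {i j : Fin (2 * m)}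
    (hij : i ≠ j) : (∑ e : KSet (2 * m) k with i ∈ e.1 ∧ j ∈ e.1, edgeP p q σ e.1) =
      (q * (2 * m - 2).choose (k - 2) + (p - q) * (m - 2).choose (k - 2) / 2) +
        (p - q) * (m - 2).choose (k - 2) / 2 * (sgn σ i * sgn σ j) := by
  have hP : ∀ e : KSet (2 * m) k,
      edgeP p q σ e.1 = q + (p - q) * if inCluster σ e.1 then 1 else 0 := fun e => by
    unfold edgeP
    split_ifs <;> ring
  have hcl := card_KSet_inCluster_pair_mem hk hσ hij
  simp only [and_comm (a := inCluster σ _)] at hcl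
  simp only [hP, sum_add_distrib, ← mul_sum, sum_boole, sum_const, nsmul_eq_mul,
    filter_filter, hcl, card_KSet_pair_mem hk hij, sgn_mul_sgn]
  by_cases hs : σ i = σ j
  · simp [hs]
    ring
  · simp [hs, Ne.symm hs]
    ring

lemma sum_sgn_eq_zero (hσ : balanced σ) : ∑ i, sgn σ i = 0 := by
  have h : ∀ i, sgn σ i = (if σ i = true then 1 else 0) - if σ i = false then 1 else 0 := by
    intro i
    unfold sgn
    cases σ i <;> simp
  rw [sum_congr rfl fun i _ => h i, sum_sub_distrib, sum_boole, sum_boole, card_label_eq hσ,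
    card_label_eq hσ, sub_self]

lemma sum_sgn_mul_sgn {n : ℕ} (σ x : Fin n → Bool) :
    ∑ i, sgn σ i * sgn x i = n - 2 * hammingDist σ x := by
  have h : ∀ i, sgn σ i * sgn x i = 1 - 2 * if σ i ≠ x i then 1 else 0 := by
    intro i
    unfold sgn
    cases σ i <;> cases x i <;> norm_num
  rw [sum_congr rfl fun i _ => h i, sum_sub_distrib, ← mul_sum, sum_boole, hammingDist]
  simp

lemma sum_mul_labelSum_sq {n : ℕ} (w : KSet n k → ℝ) (y : Fin n → Bool) :
    ∑ e, w e * labelSum y e.1 ^ 2 =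
      ∑ i, ∑ j, sgn y i * sgn y j * ∑ e : KSet n k with i ∈ e.1 ∧ j ∈ e.1, w e := by
  have h : ∀ e : KSet n k, w e * labelSum y e.1 ^ 2 =
      ∑ i, ∑ j, sgn y i * sgn y j * if i ∈ e.1 ∧ j ∈ e.1 then w e else 0 := by
    intro e
    have hsum : labelSum y e.1 = ∑ i, if i ∈ e.1 then sgn y i else 0 := by simp [labelSum]
    rw [hsum, sq, sum_mul_sum, mul_sum]
    refine sum_congr rfl fun i _ => ?_
    rw [mul_sum]
    refine sum_congr rfl fun j _ => ?_
    by_cases hi : i ∈ e.1 <;> by_cases hj : j ∈ e.1 <;> simp [hi, hj, mul_comm]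
  rw [sum_congr rfl fun e _ => h e, sum_comm]
  refine sum_congr rfl fun i _ => ?_
  rw [sum_comm]
  refine sum_congr rfl fun j _ => ?_
  rw [← mul_sum, sum_filter]

lemma sum_sum_sgn_mul_eq {n : ℕ} {P : Fin n → Fin n → ℝ} {σ : Fin n → Bool} {b c : ℝ}
    (hP : ∀ i j, i ≠ j → P i j = b + c * (sgn σ i * sgn σ j)) (y : Fin n → Bool) :
    ∑ i, ∑ j, sgn y i * sgn y j * P i j = ∑ i, P i i + b * ((∑ i, sgn y i) ^ 2 - n) +
      c * ((∑ i, sgn σ i * sgn y i) ^ 2 - n) := by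
  have hij : ∀ i j, sgn y i * sgn y j * P i j =
      b * (sgn y i * sgn y j) + c * ((sgn σ i * sgn y i) * (sgn σ j * sgn y j)) +
        if i = j then P i i - b - c else 0 := by
    intro i j
    split_ifs with h
    · subst h
      linear_combination (P i i - b - c * sgn σ i ^ 2) * sgn_sq y i - c * sgn_sq σ i
    · rw [hP i j h]
      ring
  simp only [hij, sum_add_distrib, ← mul_sum, ← sum_mul, sum_ite_eq, mem_univ, if_true,
    sum_sub_distrib, sum_const, card_univ, Fintype.card_fin, nsmul_eq_mul]
  ring

lemma sum_edgeP_mul_objGap (hk : 2 ≤ k) (p q : ℝ) (hσ : balanced σ) (hx : balanced x) :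
    ∑ e : KSet (2 * m) k, edgeP p q σ e.1 * objGap σ x e.1 =
      (p - q) * (m - 2).choose (k - 2) * (hammingDist σ x * (2 * m - hammingDist σ x) / 2) := by
  have hsq : ∀ y, balanced y → ∑ e : KSet (2 * m) k, edgeP p q σ e.1 * labelSum y e.1 ^ 2 = _ :=
    fun y _ => (sum_mul_labelSum_sq _ y).trans
      (sum_sum_sgn_mul_eq (fun i j hij => sum_edgeP_pair_mem hk p q hσ hij) y)
  simp only [objGap, mul_div_assoc', mul_sub, ← sum_div, sum_sub_distrib, hsq σ hσ, hsq x hx,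
    sum_sgn_eq_zero hσ, sum_sgn_eq_zero hx, sum_sgn_mul_sgn, hammingDist_self]
  push_cast
  ring

end Counting

/-! ### Asymptotics of binomial coefficients -/

section Asymptotics

lemma tendsto_choose_div_pow (b : ℕ) {u : ℕ → ℕ} {c : ℝ} (hu : Tendsto u atTop atTop)
    (huc : Tendsto (fun m : ℕ => (u m : ℝ) / m) atTop (nhds c)) :
    Tendsto (fun m : ℕ => ((u m).choose b : ℝ) / (m : ℝ) ^ b) atTop
      (nhds (c ^ b / b.factorial)) := by
  have hchoose : Tendsto (fun n : ℕ => (n.choose b : ℝ) / ((n : ℝ) ^ b / b.factorial)) atTop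
      (nhds 1) := by
    refine (Asymptotics.isEquivalent_iff_tendsto_one ?_).1 (isEquivalent_choose b)
    filter_upwards [eventually_gt_atTop 0] with n hn
    positivity
  have hprod := (hchoose.comp hu).mul ((huc.pow b).div_const (b.factorial : ℝ))
  rw [one_mul] at hprod
  refine hprod.congr' ?_
  filter_upwards [hu.eventually_gt_atTop 0, eventually_gt_atTop 0] with m hum hm
  simp only [Function.comp, div_pow]
  field_simp

lemma tendsto_mul_sub_div (c l : ℕ) :
    Tendsto (fun m : ℕ => ((c * m - l : ℕ) : ℝ) / m) atTop (nhds c) := by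
  rcases c.eq_zero_or_pos with rfl | hc
  · simp
  have h : Tendsto (fun m : ℕ => (c : ℝ) - (l : ℝ) / m) atTop (nhds (c - 0)) :=
    tendsto_const_nhds.sub (tendsto_const_div_atTop_nhds_zero_nat _)
  rw [sub_zero] at h
  refine h.congr' ?_
  filter_upwards [eventually_gt_atTop l] with m hm
  have hm0 : (m : ℝ) ≠ 0 := by exact_mod_cast (by omega : m ≠ 0)
  rw [Nat.cast_sub (hm.le.trans (Nat.le_mul_of_pos_left m hc))]
  push_cast
  field_simp

lemma tendsto_choose_mul_sub_div_pow {c : ℕ} (hc : 0 < c) (l b : ℕ) :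
    Tendsto (fun m : ℕ => ((c * m - l).choose b : ℝ) / (m : ℝ) ^ b) atTop
      (nhds ((c : ℝ) ^ b / b.factorial)) :=
  tendsto_choose_div_pow b
    ((tendsto_sub_atTop_nat l).comp (tendsto_id.const_mul_atTop' hc)) (tendsto_mul_sub_div c l)

lemma tendsto_choose_mul_choose_div_choose {k a : ℕ} (ha : a < k) :
    Tendsto (fun m : ℕ => (((m - 1).choose (k - 1 - a) * m.choose a : ℕ) : ℝ) /
      ((2 * m - 1).choose (k - 1) : ℝ)) atTop (nhds (((k - 1).choose a : ℝ) / 2 ^ (k - 1))) := by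
  have h := ((tendsto_choose_mul_sub_div_pow one_pos 1 (k - 1 - a)).mul
    (tendsto_choose_mul_sub_div_pow one_pos 0 a)).div
      (tendsto_choose_mul_sub_div_pow two_pos 1 (k - 1)) (by positivity)
  have hlim : ((1 : ℕ) ^ (k - 1 - a) / ((k - 1 - a).factorial : ℝ)) *
      ((1 : ℕ) ^ a / (a.factorial : ℝ)) / ((2 : ℕ) ^ (k - 1) / ((k - 1).factorial : ℝ)) =
        ((k - 1).choose a : ℝ) / 2 ^ (k - 1) := by
    rw [Nat.cast_choose ℝ (by omega : a ≤ k - 1)]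
    simp only [Nat.cast_one, one_pow, Nat.cast_ofNat]
    field_simp
  rw [hlim] at h
  refine h.congr' ?_
  filter_upwards [eventually_gt_atTop k] with m hm
  have hm0 : (0 : ℝ) < m := by exact_mod_cast (by omega : 0 < m)
  have hpow : (m : ℝ) ^ (k - 1) = (m : ℝ) ^ (k - 1 - a) * (m : ℝ) ^ a := by
    rw [← pow_add, Nat.sub_add_cancel (by omega)]
  simp only [Pi.div_apply, one_mul, tsub_zero, hpow]
  push_cast
  field_simp

lemma tendsto_choose_mul_self_div_choose {k : ℕ} (hk : 2 ≤ k) :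
    Tendsto (fun m : ℕ => ((m - 2).choose (k - 2) : ℝ) * m / ((2 * m - 1).choose (k - 1) : ℝ))
      atTop (nhds (((k : ℝ) - 1) / 2 ^ (k - 1))) := by
  obtain ⟨l, rfl⟩ := Nat.exists_eq_add_of_le' hk
  have h := (tendsto_choose_mul_sub_div_pow one_pos 2 l).div
    (tendsto_choose_mul_sub_div_pow two_pos 1 (l + 1)) (by positivity)
  have hlim : ((1 : ℕ) ^ l / (l.factorial : ℝ)) / ((2 : ℕ) ^ (l + 1) / ((l + 1).factorial : ℝ)) =
      (((l + 2 : ℕ) : ℝ) - 1) / 2 ^ (l + 2 - 1) := by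
    rw [show l + 2 - 1 = l + 1 from rfl, Nat.factorial_succ]
    push_cast
    rw [one_pow]
    field_simp
    ring
  rw [hlim] at h
  refine h.congr' ?_
  filter_upwards [eventually_gt_atTop 0] with m hm
  simp only [Pi.div_apply, one_mul, show l + 2 - 1 = l + 1 from rfl, Nat.add_sub_cancel, pow_succ]
  field_simp

end Asymptotics

/-! ### The rate function -/

section Rate

variable {k : ℕ} {α β : ℝ}

/-- The constant in the edge probability of an edge through `v` with `a` vertices labelled
opposite to `v`: `α` for in-cluster edges, `β` for the others. -/
noncomputable def edgeRate (α β : ℝ) (a : ℕ) : ℝ := if a = 0 then α else β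

/-- The limit, in units of `log n`, of the expected number of edges through a vertex `v` with `a`
vertices labelled opposite to `v`. -/
noncomputable def profileRate (k : ℕ) (α β : ℝ) (a : ℕ) : ℝ :=
  edgeRate α β a * (((k - 1).choose a : ℝ) / 2 ^ (k - 1))

/-- The function of `t` whose supremum over `t ≥ 0` is `I₂(α,β)`. -/
noncomputable def limitExponent (k : ℕ) (α β t : ℝ) : ℝ :=
  ∑ a ∈ range k, profileRate k α β a * (1 - Real.exp (-(t * gain k a)))

/-- The derivative of `limitExponent`. -/
noncomputable def limitSlope (k : ℕ) (α β t : ℝ) : ℝ :=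
  ∑ a ∈ range k, profileRate k α β a * (gain k a * Real.exp (-(t * gain k a)))

lemma profileRate_nonneg (hα : 0 ≤ α) (hβ : 0 ≤ β) (a : ℕ) : 0 ≤ profileRate k α β a := by
  unfold profileRate edgeRate
  split_ifs <;> positivity

lemma I2def_eq_sSup_limitExponent (hk : 1 ≤ k) (α β : ℝ) :
    I2def k α β = sSup (limitExponent k α β '' Set.Ici 0) := by
  obtain ⟨l, rfl⟩ := Nat.exists_eq_add_of_le' hk
  have hsum : ∀ t, limitExponent (l + 1) α β t =
      (1 / 2 ^ l) * (α * (1 - Real.exp (-(((l + 1 : ℕ) - 1) * t))) + β * ∑ a ∈ Icc 1 l,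
        (l.choose a : ℝ) * (1 - Real.exp (-(((l + 1 : ℕ) - 1 - 2 * (a : ℝ)) * t)))) := by
    intro t
    have hIcc : range (l + 1) = insert 0 (Icc 1 l) := by grind
    rw [limitExponent, hIcc, sum_insert (by simp), mul_add, mul_sum, mul_sum]
    congr 1
    · simp only [profileRate, edgeRate, gain, if_true, Nat.add_sub_cancel, Nat.choose_zero_right]
      push_cast
      ring_nf
    · refine sum_congr rfl fun a ha => ?_
      rw [profileRate, edgeRate, gain, if_neg (by grind), Nat.add_sub_cancel, mul_comm t]
      ring
  unfold I2def
  congr 1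
  ext y
  simp only [Nat.add_sub_cancel, ← hsum, Set.mem_ofPred_eq, Set.mem_image, Set.mem_Ici,
    eq_comm (a := y)]

lemma limitExponent_le_I2def (hk : 1 ≤ k) (hα : 0 ≤ α) (hβ : 0 ≤ β) {t : ℝ} (ht : 0 ≤ t) :
    limitExponent k α β t ≤ I2def k α β := by
  rw [I2def_eq_sSup_limitExponent hk]
  refine le_csSup ⟨∑ a ∈ range k, profileRate k α β a, ?_⟩ (Set.mem_image_of_mem _ ht)
  rintro _ ⟨s, -, rfl⟩
  refine sum_le_sum fun a _ => mul_le_of_le_one_right (profileRate_nonneg hα hβ a) ?_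
  linarith [Real.exp_pos (-(s * gain k a))]

lemma exists_lt_limitExponent (hk : 1 ≤ k) {c : ℝ} (h : c < I2def k α β) :
    ∃ t, 0 ≤ t ∧ c < limitExponent k α β t := by
  rw [I2def_eq_sSup_limitExponent hk] at h
  obtain ⟨_, ⟨t, ht, rfl⟩, hc⟩ := exists_lt_of_lt_csSup (Set.nonempty_Ici.image _) h
  exact ⟨t, ht, hc⟩

lemma hasDerivAt_limitExponent (k : ℕ) (α β t : ℝ) :
    HasDerivAt (limitExponent k α β) (limitSlope k α β t) t := by
  unfold limitExponent limitSlope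
  refine HasDerivAt.fun_sum fun a _ => HasDerivAt.const_mul _ ?_
  exact (((hasDerivAt_id' t).mul_const (gain k a)).neg.exp.const_sub 1).congr_deriv
    (by simp only [Pi.neg_apply]; ring)

lemma continuous_limitSlope (k : ℕ) (α β : ℝ) : Continuous (limitSlope k α β) := by
  unfold limitSlope
  fun_prop

lemma sum_choose_mul_gain (k : ℕ) : ∑ a ∈ range k, ((k - 1).choose a : ℝ) * gain k a = 0 := by
  have hreflect := sum_range_reflect (fun a => ((k - 1).choose a : ℝ) * gain k a) k
  have hneg : ∀ a ∈ range k, ((k - 1).choose (k - 1 - a) : ℝ) * gain k (k - 1 - a) =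
      -(((k - 1).choose a : ℝ) * gain k a) := by
    intro a ha
    rw [mem_range] at ha
    rw [Nat.choose_symm (by omega), gain, gain, Nat.cast_sub (by omega), Nat.cast_sub (by omega)]
    push_cast
    ring
  rw [sum_congr rfl hneg, sum_neg_distrib] at hreflect
  linarith

lemma limitSlope_zero_pos (hk : 2 ≤ k) (hαβ : β < α) : 0 < limitSlope k α β 0 := by
  have hterm : ∀ a, profileRate k α β a * (gain k a * Real.exp (-(0 * gain k a))) =
      β / 2 ^ (k - 1) * (((k - 1).choose a : ℝ) * gain k a) +
        if a = 0 then (α - β) * (k - 1) / 2 ^ (k - 1) else 0 := by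
    intro a
    rcases eq_or_ne a 0 with rfl | ha
    · simp only [profileRate, edgeRate, gain, if_true, zero_mul, neg_zero, Real.exp_zero,
        Nat.choose_zero_right, Nat.cast_one, Nat.cast_zero]
      ring
    · simp only [profileRate, edgeRate, gain, if_neg ha, zero_mul, neg_zero, Real.exp_zero]
      ring
  have hk1 : (0 : ℝ) < k - 1 := by linarith [(Nat.ofNat_le_cast (α := ℝ)).2 hk]
  rw [limitSlope, sum_congr rfl fun a _ => hterm a, sum_add_distrib, ← mul_sum,
    sum_choose_mul_gain, mul_zero, zero_add, sum_ite_eq', if_pos (mem_range.2 (by omega))]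
  exact div_pos (mul_pos (sub_pos.2 hαβ) hk1) (by positivity)

lemma mul_exp_neg_mul_le_abs {T : ℝ} (hT : 0 ≤ T) (x : ℝ) : x * Real.exp (-(T * x)) ≤ |x| := by
  rcases le_total 0 x with hx | hx
  · rw [abs_of_nonneg hx]
    exact mul_le_of_le_one_right hx (Real.exp_le_one_iff.2 (by nlinarith))
  · exact (mul_nonpos_of_nonpos_of_nonneg hx (Real.exp_pos _).le).trans (abs_nonneg x)

lemma exists_limitSlope_le_neg_one (hk : 2 ≤ k) (hα : 0 ≤ α) (hβ : 0 < β) :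
    ∃ T, 0 < T ∧ limitSlope k α β T ≤ -1 := by
  obtain ⟨l, rfl⟩ := Nat.exists_eq_add_of_le' (by omega : 1 ≤ k)
  have hl : (1 : ℝ) ≤ l := by exact_mod_cast (by omega : 1 ≤ l)
  set lam := profileRate (l + 1) α β l with hlam_def
  have hlam : 0 < lam := by
    rw [hlam_def, profileRate, edgeRate, if_neg (by omega), Nat.add_sub_cancel, Nat.choose_self]
    positivity
  set C := ∑ a ∈ range l, profileRate (l + 1) α β a * |gain (l + 1) a|
  have hC : 0 ≤ C :=
    sum_nonneg fun a _ => mul_nonneg (profileRate_nonneg hα hβ.le a) (abs_nonneg _)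
  set T := (C + 1) / lam with hT_def
  have hT : 0 < T := by positivity
  have hrest : ∑ a ∈ range l, profileRate (l + 1) α β a *
      (gain (l + 1) a * Real.exp (-(T * gain (l + 1) a))) ≤ C :=
    sum_le_sum fun a _ => mul_le_mul_of_nonneg_left (mul_exp_neg_mul_le_abs hT.le _)
      (profileRate_nonneg hα hβ.le a)
  have hgain : gain (l + 1) l = -l := by
    unfold gain
    push_cast
    ring
  have hexp : T ≤ l * Real.exp (T * l) := by
    nlinarith [Real.add_one_le_exp (T * l), mul_le_mul_of_nonneg_left hl hT.le]
  have hlast : C + 1 ≤ lam * (l * Real.exp (T * l)) := by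
    calc C + 1 = lam * T := by rw [hT_def]; field_simp
      _ ≤ _ := mul_le_mul_of_nonneg_left hexp hlam.le
  refine ⟨T, hT, ?_⟩
  rw [limitSlope, sum_range_succ, hgain, mul_neg, neg_neg]
  linarith

lemma exists_affine_lower_bounds_of_hasDerivAt {f : ℝ → ℝ} {r t : ℝ} (hr : 0 < r)
    (hf : HasDerivAt f (-r) t) :
    ∃ s, 0 < s ∧ f t + s * r / 2 ≤ f (t - s) ∧ f t - 3 * (s * r) / 2 ≤ f (t + s) := by
  have hlittle := hf.isLittleO.def (half_pos hr)
  rw [Metric.eventually_nhds_iff] at hlittle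
  obtain ⟨ρ, hρ, hball⟩ := hlittle
  have hs : 0 < ρ / 2 := half_pos hρ
  have hminus := hball (y := t - ρ / 2) (by
    rw [Real.dist_eq, sub_sub_cancel_left, abs_neg, abs_of_pos hs]
    linarith)
  have hplus := hball (y := t + ρ / 2) (by
    rw [Real.dist_eq, add_sub_cancel_left, abs_of_pos hs]
    linarith)
  rw [sub_sub_cancel_left, norm_neg, Real.norm_of_nonneg hs.le, smul_eq_mul, Real.norm_eq_abs,
    abs_le] at hminus
  rw [add_sub_cancel_left, Real.norm_of_nonneg hs.le, smul_eq_mul, Real.norm_eq_abs,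
    abs_le] at hplus
  exact ⟨ρ / 2, hs, by linarith [hminus.1], by linarith [hplus.1]⟩

/- The maximizer of `limitExponent` is perturbed to a point `t` of small negative slope `-r`: the
tilted mean is then slightly negative and the tilted law concentrates in `[-2 r log n, 0]`. -/
lemma exists_tilting_parameters (hk : 2 ≤ k) (hβ : 0 < β) (hαβ : β < α) (hI : I2def k α β < 1) :
    ∃ t s η ε : ℝ, 0 < t ∧ 0 < s ∧ 0 < ε ∧ limitExponent k α β t + t * η + 3 * ε < 1 ∧
      limitExponent k α β t + 3 * ε < limitExponent k α β (t - s) ∧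
      limitExponent k α β t + 3 * ε < limitExponent k α β (t + s) + s * η := by
  have hα : 0 < α := hβ.trans hαβ
  obtain ⟨T, hT, hslopeT⟩ := exists_limitSlope_le_neg_one hk hα.le hβ
  have hδ : 0 < 1 - I2def k α β := sub_pos.2 hI
  set δ := 1 - I2def k α β
  set r := min 1 (δ / (4 * T))
  have hr : 0 < r := lt_min one_pos (by positivity)
  have hrT : T * r ≤ δ / 4 := by
    calc T * r ≤ T * (δ / (4 * T)) := mul_le_mul_of_nonneg_left (min_le_right _ _) hT.le
      _ = δ / 4 := by field_simp
  obtain ⟨t, ht, hslope⟩ := intermediate_value_Icc' hT.le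
    (continuous_limitSlope k α β).continuousOn (show -r ∈ Set.Icc _ _ from
      ⟨hslopeT.trans (neg_le_neg (min_le_left _ _)),
        (neg_neg_of_pos hr).le.trans (limitSlope_zero_pos hk hαβ).le⟩)
  have ht0 : 0 < t := ht.1.lt_of_ne fun h => by
    have := limitSlope_zero_pos hk hαβ
    rw [h, hslope] at this
    linarith
  obtain ⟨s, hs, hminus, hplus⟩ := exists_affine_lower_bounds_of_hasDerivAt hr
    (hslope ▸ hasDerivAt_limitExponent k α β t)
  have hle := limitExponent_le_I2def (by omega : 1 ≤ k) hα.le hβ.le ht0.le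
  have htr : t * r ≤ T * r := mul_le_mul_of_nonneg_right ht.2 hr.le
  have hsr : 0 < s * r := mul_pos hs hr
  have hεδ := min_le_left (δ / 12) (s * r / 12)
  have hεs := min_le_right (δ / 12) (s * r / 12)
  exact ⟨t, s, 2 * r, min (δ / 12) (s * r / 12), ht0, hs, by positivity, by linarith,
    by linarith, by linarith⟩

end Rate

/-! ### Edge weights -/

section EdgeWeight

/-- The probability of the edge `e` in the conditional law of `HSBM(n,p,q;k)` given `σ`. -/
noncomputable def edgeWeight {n : ℕ} (k : ℕ) (α β : ℝ) (σ : Fin n → Bool) (e : KSet n k) : ℝ :=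
  edgeP (pParam k α n) (pParam k β n) σ e.1

/-- The gain of the edge `e` when `v` is moved, provided that `v` is the only vertex of `A` in `e`;
zero for all other edges. For different `v ∈ A` these gains depend on disjoint sets of edges. -/
noncomputable def soloGain {n k : ℕ} (σ : Fin n → Bool) (A : Finset (Fin n)) (v : Fin n)
    (e : KSet n k) : ℝ :=
  if v ∈ e.1 ∧ ¬ Collides A v e then gain k (oppositeCount σ v e.1) else 0

variable {k : ℕ} {α β : ℝ}

lemma pParam_nonneg (hα : 0 ≤ α) (n : ℕ) : 0 ≤ pParam k α n :=
  div_nonneg (mul_nonneg hα (Real.log_natCast_nonneg n)) (Nat.cast_nonneg _)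

lemma pParam_mono (hβα : β ≤ α) (n : ℕ) : pParam k β n ≤ pParam k α n :=
  div_le_div_of_nonneg_right (mul_le_mul_of_nonneg_right hβα (Real.log_natCast_nonneg n))
    (Nat.cast_nonneg _)

lemma pParam_mul_choose (hk : 2 ≤ k) (α : ℝ) {n : ℕ} (hn : k ≤ n) :
    pParam k α n * ((n - 2).choose (k - 2) : ℝ) = α * Real.log n * (k - 1) / (n - 1) := by
  obtain ⟨l, rfl⟩ := Nat.exists_eq_add_of_le' hk
  obtain ⟨N, rfl⟩ := Nat.exists_eq_add_of_le' (hk.trans hn)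
  have habsorb := congrArg (Nat.cast : ℕ → ℝ) (Nat.add_one_mul_choose_eq N l)
  have hchoose : (0 : ℝ) < (N + 1).choose (l + 1) := by exact_mod_cast Nat.choose_pos (by omega)
  simp only [pParam, Nat.add_sub_cancel, Nat.add_succ_sub_one]
  push_cast at habsorb ⊢
  rw [div_mul_eq_mul_div, div_eq_div_iff hchoose.ne' (by linarith [N.cast_nonneg (α := ℝ)])]
  linear_combination α * Real.log (N + 2) * habsorb

lemma pParam_mul_card (hk : 1 ≤ k) (α : ℝ) {n : ℕ} (hn : k ≤ n) :
    pParam k α n * (Fintype.card (KSet n k) : ℝ) = α * Real.log n * n / k := by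
  obtain ⟨l, rfl⟩ := Nat.exists_eq_add_of_le' hk
  obtain ⟨N, rfl⟩ := Nat.exists_eq_add_of_le' (hk.trans hn)
  have habsorb := congrArg (Nat.cast : ℕ → ℝ) (Nat.add_one_mul_choose_eq N l)
  have hchoose : (0 : ℝ) < N.choose l := by exact_mod_cast Nat.choose_pos (by omega)
  rw [Fintype.card_finset_len, Fintype.card_fin]
  simp only [pParam, Nat.add_sub_cancel]
  push_cast at habsorb ⊢
  field_simp
  linear_combination -α * Real.log (N + 1) * habsorb

lemma tendsto_log_div_sub_one :
    Tendsto (fun n : ℕ => Real.log n / ((n : ℝ) - 1)) atTop (nhds 0) := by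
  have hlog : Tendsto (fun n : ℕ => Real.log n / n) atTop (nhds 0) :=
    Real.isLittleO_log_id_atTop.tendsto_div_nhds_zero.comp tendsto_natCast_atTop_atTop
  have hdouble := hlog.const_mul 2
  rw [mul_zero] at hdouble
  refine squeeze_zero' ?_ ?_ hdouble <;> filter_upwards [eventually_ge_atTop 2] with n hn
  all_goals have hn2 : (2 : ℝ) ≤ n := by exact_mod_cast hn
  · exact div_nonneg (Real.log_natCast_nonneg n) (by linarith)
  · rw [← mul_div_assoc, div_le_div_iff₀ (by linarith) (by linarith)]
    nlinarith [Real.log_natCast_nonneg n]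

lemma tendsto_pParam (hk : 2 ≤ k) (hα : 0 ≤ α) : Tendsto (pParam k α) atTop (nhds 0) := by
  have h := tendsto_log_div_sub_one.const_mul (α * (k - 1))
  rw [mul_zero] at h
  refine squeeze_zero' (Eventually.of_forall (pParam_nonneg hα)) ?_ h
  filter_upwards [eventually_ge_atTop k] with n hn
  calc pParam k α n ≤ pParam k α n * ((n - 2).choose (k - 2) : ℝ) :=
        le_mul_of_one_le_right (pParam_nonneg hα n)
          (by exact_mod_cast Nat.choose_pos (by omega))
    _ = α * (k - 1) * (Real.log n / (n - 1)) := by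
        rw [pParam_mul_choose hk α hn]
        ring

lemma tendsto_two_mul_atTop : Tendsto (fun m : ℕ => 2 * m) atTop atTop :=
  tendsto_id.const_mul_atTop' two_pos

lemma tendsto_log_two_mul : Tendsto (fun m : ℕ => Real.log (2 * m : ℕ)) atTop atTop :=
  Real.tendsto_log_atTop.comp (tendsto_natCast_atTop_atTop.comp tendsto_two_mul_atTop)

lemma edgeWeight_nonneg (hα : 0 ≤ α) (hβ : 0 ≤ β) {n : ℕ} (σ : Fin n → Bool) (e : KSet n k) :
    0 ≤ edgeWeight k α β σ e := by
  unfold edgeWeight edgeP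
  split_ifs
  exacts [pParam_nonneg hα n, pParam_nonneg hβ n]

lemma edgeWeight_le (hβα : β ≤ α) {n : ℕ} (σ : Fin n → Bool) (e : KSet n k) :
    edgeWeight k α β σ e ≤ pParam k α n := by
  unfold edgeWeight edgeP
  split_ifs
  exacts [le_rfl, pParam_mono hβα n]

lemma eventually_edgeWeight_mem_Icc (hk : 2 ≤ k) (hβ : 0 ≤ β) (hβα : β ≤ α) {c : ℝ} (hc : 0 < c) :
    ∀ᶠ m : ℕ in atTop, ∀ (σ : Fin (2 * m) → Bool) (e : KSet (2 * m) k),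
      edgeWeight k α β σ e ∈ Set.Icc 0 c := by
  have hα := hβ.trans hβα
  filter_upwards [((tendsto_pParam hk hα).comp tendsto_two_mul_atTop).eventually_le_const hc]
    with m hm σ e
  exact ⟨edgeWeight_nonneg hα hβ σ e, (edgeWeight_le hβα σ e).trans hm⟩

lemma sum_edgeWeight_collides_le (hk : 2 ≤ k) (hβ : 0 ≤ β) (hβα : β ≤ α) {n : ℕ} (hn : k ≤ n)
    (σ : Fin n → Bool) (v : Fin n) (A : Finset (Fin n)) :
    ∑ e : KSet n k with Collides A v e, edgeWeight k α β σ e ≤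
      #A * (α * Real.log n * (k - 1) / (n - 1)) :=
  calc ∑ e : KSet n k with Collides A v e, edgeWeight k α β σ e
      ≤ #{e : KSet n k | Collides A v e} • pParam k α n :=
        sum_le_card_nsmul _ _ _ fun e _ => edgeWeight_le hβα σ e
    _ ≤ (#A * (n - 2).choose (k - 2) : ℕ) * pParam k α n := by
        rw [nsmul_eq_mul]
        exact mul_le_mul_of_nonneg_right (by exact_mod_cast card_collides_le hk A v)
          (pParam_nonneg (hβ.trans hβα) n)
    _ = #A * (α * Real.log n * (k - 1) / (n - 1)) := by
        rw [← pParam_mul_choose hk α hn]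
        push_cast
        ring

lemma exists_sum_edgeWeight_collides_le (hk : 2 ≤ k) (hβ : 0 ≤ β) (hβα : β ≤ α) {δ : ℝ}
    (hδ : 0 < δ) :
    ∃ ε : ℝ, 0 < ε ∧ ∀ᶠ n : ℕ in atTop, ∀ (σ : Fin n → Bool) (v : Fin n) (A : Finset (Fin n)),
      #A ≤ ε * n → ∑ e : KSet n k with Collides A v e, edgeWeight k α β σ e ≤ δ * Real.log n := by
  have hα := hβ.trans hβα
  have hk1 : (0 : ℝ) ≤ k - 1 := by linarith [(Nat.ofNat_le_cast (α := ℝ)).2 hk]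
  have : 0 ≤ α * (k - 1) := mul_nonneg hα hk1
  refine ⟨δ / (2 * (α * (k - 1) + 1)), by positivity, ?_⟩
  set ε := δ / (2 * (α * (k - 1) + 1)) with hε
  filter_upwards [eventually_ge_atTop k] with n hn σ v A hA
  have hn2 : (2 : ℝ) ≤ n := by exact_mod_cast hk.trans hn
  have hε0 : 0 ≤ ε := by positivity
  have hfrac : (#A : ℝ) / (n - 1) ≤ 2 * ε := by
    rw [div_le_iff₀ (by linarith)]
    nlinarith
  have hεδ : 2 * ε * (α * (k - 1) + 1) = δ := by
    rw [hε]
    field_simp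
  have := Real.log_natCast_nonneg n
  calc ∑ e : KSet n k with Collides A v e, edgeWeight k α β σ e
      ≤ #A * (α * Real.log n * (k - 1) / (n - 1)) :=
        sum_edgeWeight_collides_le hk hβ hβα hn σ v A
    _ = #A / (n - 1) * (α * (k - 1)) * Real.log n := by ring
    _ ≤ 2 * ε * (α * (k - 1) + 1) * Real.log n := by
        gcongr
        linarith
    _ = δ * Real.log n := by rw [hεδ]

lemma edgeWeight_eq_edgeRate {n : ℕ} (σ : Fin n → Bool) {v : Fin n} {e : KSet n k} (hv : v ∈ e.1) :
    edgeWeight k α β σ e = edgeRate α β (oppositeCount σ v e.1) * Real.log n /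
      ((n - 1).choose (k - 1) : ℝ) := by
  unfold edgeWeight edgeP edgeRate pParam
  by_cases hc : inCluster σ e.1
  · rw [if_pos hc, if_pos ((inCluster_iff_oppositeCount_eq_zero σ hv).1 hc)]
  · rw [if_neg hc, if_neg (mt (inCluster_iff_oppositeCount_eq_zero σ hv).2 hc)]

lemma sum_edgeWeight_mem_oppositeCount {m : ℕ} {σ : Fin (2 * m) → Bool} (hσ : balanced σ)
    (v : Fin (2 * m)) (g : ℕ → ℝ) :
    ∑ e : KSet (2 * m) k with v ∈ e.1, edgeWeight k α β σ e * g (oppositeCount σ v e.1) =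
      Real.log (2 * m : ℕ) * ∑ a ∈ range k, edgeRate α β a *
        (((m - 1).choose (k - 1 - a) * m.choose a : ℕ) / ((2 * m - 1).choose (k - 1) : ℝ)) *
          g a := by
  have h := sum_mem_oppositeCount (k := k) hσ v fun a => edgeRate α β a * Real.log (2 * m : ℕ) /
    ((2 * m - 1).choose (k - 1) : ℝ) * g a
  rw [sum_congr rfl fun e he => by rw [edgeWeight_eq_edgeRate σ (mem_filter.1 he).2], sum_filter,
    h, mul_sum]
  exact sum_congr rfl fun a _ => by ring

lemma tendsto_sum_edgeRate (k : ℕ) (α β : ℝ) (g : ℕ → ℝ) :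
    Tendsto (fun m : ℕ => ∑ a ∈ range k, edgeRate α β a *
      (((m - 1).choose (k - 1 - a) * m.choose a : ℕ) / ((2 * m - 1).choose (k - 1) : ℝ)) * g a)
      atTop (nhds (∑ a ∈ range k, profileRate k α β a * g a)) :=
  tendsto_finsetSum _ fun _ ha =>
    ((tendsto_choose_mul_choose_div_choose (mem_range.1 ha)).const_mul _).mul_const _

lemma abs_sum_soloGain_sub_le (hα : 0 ≤ α) (hβ : 0 ≤ β) {φ : ℝ → ℝ} (hφ : φ 0 = 0) {n : ℕ}
    (σ : Fin n → Bool) (A : Finset (Fin n)) (v : Fin n) :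
    |∑ e : KSet n k, edgeWeight k α β σ e * φ (soloGain σ A v e) -
      ∑ e : KSet n k with v ∈ e.1, edgeWeight k α β σ e * φ (gain k (oppositeCount σ v e.1))| ≤
        (∑ a ∈ range k, |φ (gain k a)|) *
          ∑ e : KSet n k with Collides A v e, edgeWeight k α β σ e := by
  rw [sum_filter, ← sum_sub_distrib, mul_sum, sum_filter]
  refine (abs_sum_le_sum_abs _ _).trans (sum_le_sum fun e _ => ?_)
  have hw := edgeWeight_nonneg (k := k) hα hβ σ e
  by_cases hv : v ∈ e.1
  · by_cases hc : Collides A v e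
    · have hlt := e.2 ▸ oppositeCount_lt_card σ hv
      have hle := single_le_sum (fun a _ => abs_nonneg (φ (gain k a))) (mem_range.2 hlt)
      rw [soloGain, if_neg fun h => h.2 hc, if_pos hv, if_pos hc, hφ, mul_zero, zero_sub, abs_neg,
        abs_mul, abs_of_nonneg hw, mul_comm]
      exact mul_le_mul_of_nonneg_right hle hw
    · simp [soloGain, hv, hc]
  · have hc : ¬ Collides A v e := fun h => hv h.1
    simp [soloGain, hv, hc, hφ]

lemma exists_abs_sum_edgeWeight_soloGain_sub_le (hk : 2 ≤ k) (hβ : 0 ≤ β) (hβα : β ≤ α)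
    {φ : ℝ → ℝ} (hφ : φ 0 = 0) {δ : ℝ} (hδ : 0 < δ) :
    ∃ ε : ℝ, 0 < ε ∧ ∀ᶠ m : ℕ in atTop, ∀ (σ : Fin (2 * m) → Bool) (A : Finset (Fin (2 * m))),
      balanced σ → #A ≤ ε * (2 * m : ℕ) → ∀ v,
        |∑ e : KSet (2 * m) k, edgeWeight k α β σ e * φ (soloGain σ A v e) -
          (∑ a ∈ range k, profileRate k α β a * φ (gain k a)) * Real.log (2 * m : ℕ)| ≤
            δ * Real.log (2 * m : ℕ) := by
  set G := ∑ a ∈ range k, |φ (gain k a)|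
  have hG : 0 ≤ G := sum_nonneg fun a _ => abs_nonneg _
  have hδG : 0 < δ / (2 * (G + 1)) := by positivity
  obtain ⟨ε, hε, hcollide⟩ := exists_sum_edgeWeight_collides_le hk hβ hβα hδG
  have hprofile := (tendsto_sum_edgeRate k α β fun a => φ (gain k a)).eventually
    (Metric.closedBall_mem_nhds _ (half_pos hδ))
  refine ⟨ε, hε, ?_⟩
  filter_upwards [hprofile, tendsto_two_mul_atTop.eventually hcollide] with m hm hcol σ A hσ hA v
  have hL := Real.log_natCast_nonneg (2 * m)
  have hsolo := abs_sum_soloGain_sub_le (k := k) (hβ.trans hβα) hβ hφ σ A v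
  rw [sum_edgeWeight_mem_oppositeCount hσ v fun a => φ (gain k a)] at hsolo
  rw [Real.dist_eq] at hm
  have hscale := mul_le_mul_of_nonneg_left hm hL
  rw [← abs_of_nonneg hL, ← abs_mul, abs_of_nonneg hL, mul_sub] at hscale
  have hhalf : G * (δ / (2 * (G + 1))) ≤ δ / 2 := by
    rw [← mul_div_assoc, div_le_div_iff₀ (by positivity) two_pos]
    nlinarith
  have hcost := (mul_le_mul_of_nonneg_left (hcol σ v A hA) hG).trans_eq (mul_assoc _ _ _).symm
  have hcost' := hcost.trans (mul_le_mul_of_nonneg_right hhalf hL)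
  rw [mul_comm (∑ a ∈ range k, profileRate k α β a * φ (gain k a))]
  refine (abs_sub_le _ _ _).trans ((add_le_add (hsolo.trans hcost') hscale).trans_eq ?_)
  ring

end EdgeWeight

/-! ### Recovery above the threshold -/

section Recovery

variable {k : ℕ} {α β : ℝ}

lemma sum_soloGain_sub_collides_le {n : ℕ} {σ x : Fin n → Bool} {S : Finset (Fin n)}
    (hS : ∀ i, i ∈ S ↔ x i ≠ σ i) {t : ℝ} (ht : 0 ≤ t) (e : KSet n k) :
    ∑ v ∈ S, ((1 - Real.exp (-(t * soloGain σ S v e))) -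
      Real.exp (t * k ^ 2) * if Collides S v e then 1 else 0) ≤
        1 - Real.exp (-(t * objGap σ x e.1)) := by
  have hagree : ∀ j ∉ S, x j = σ j := fun j hj => not_not.1 (mt (hS j).2 hj)
  by_cases hcol : ∃ v ∈ S, Collides S v e
  · obtain ⟨v, hvS, hv⟩ := hcol
    have hsolo : ∀ u ∈ S, soloGain σ S u e = 0 := by
      refine fun u _ => if_neg fun hu => ?_
      rcases eq_or_ne u v with rfl | huv
      · exact hu.2 hv
      · exact hu.2 ⟨hu.1, v, hvS, huv.symm, hv.1⟩
    have hnonneg : ∀ u ∈ S, (0 : ℝ) ≤ if Collides S u e then 1 else 0 := fun u _ => by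
      split_ifs <;> norm_num
    have hone := single_le_sum hnonneg hvS
    rw [if_pos hv] at hone
    have hgap : Real.exp (-(t * objGap σ x e.1)) ≤ Real.exp (t * k ^ 2) := by
      have habs := e.2 ▸ neg_le_of_abs_le (abs_objGap_le σ x e.1)
      exact Real.exp_le_exp.2 (by nlinarith)
    rw [sum_congr rfl fun u hu => by rw [hsolo u hu]]
    simp only [mul_zero, neg_zero, Real.exp_zero, sub_self, zero_sub, sum_neg_distrib, ← mul_sum]
    nlinarith [Real.exp_pos (t * k ^ 2)]
  · push Not at hcol
    by_cases hmeet : ∃ v ∈ S, v ∈ e.1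
    · obtain ⟨v, hvS, hve⟩ := hmeet
      have honly : ∀ j ∈ S, j ≠ v → j ∉ e.1 := fun j hj hjv hje => hcol v hvS ⟨hve, j, hj, hjv, hje⟩
      have hgain : objGap σ x e.1 = gain k (oppositeCount σ v e.1) := by
        rw [objGap_eq_gain hve ((hS v).1 hvS)
          fun j hje hjv => hagree j fun hj => honly j hj hjv hje, e.2]
      rw [sum_eq_single_of_mem v hvS fun u hu huv => by
        simp [soloGain, honly u hu huv, hcol u hu]]
      simp [soloGain, hve, hcol v hvS, hgain]
    · push Not at hmeet
      rw [objGap_eq_zero fun j hj => hagree j fun hjS => hmeet j hjS hj]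
      rw [sum_eq_zero fun u hu => by simp [soloGain, hmeet u hu, hcol u hu]]
      simp

lemma exists_mul_log_le_sum_soloGain_sub_collides (hk : 2 ≤ k) (hβ : 0 ≤ β) (hβα : β ≤ α) (t : ℝ)
    {K δ : ℝ} (hK : 0 < K) (hδ : 0 < δ) :
    ∃ ε : ℝ, 0 < ε ∧ ∀ᶠ m : ℕ in atTop, ∀ (σ : Fin (2 * m) → Bool) (S : Finset (Fin (2 * m))),
      balanced σ → #S ≤ ε * (2 * m : ℕ) → ∀ v,
        (limitExponent k α β t - δ) * Real.log (2 * m : ℕ) ≤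
          ∑ e : KSet (2 * m) k, edgeWeight k α β σ e *
            ((1 - Real.exp (-(t * soloGain σ S v e))) - K * if Collides S v e then 1 else 0) := by
  obtain ⟨ε₁, hε₁, hsolo⟩ := exists_abs_sum_edgeWeight_soloGain_sub_le hk hβ hβα
    (φ := fun y => 1 - Real.exp (-(t * y))) (by simp) (half_pos hδ)
  obtain ⟨ε₂, hε₂, hcol⟩ := exists_sum_edgeWeight_collides_le hk hβ hβα
    (show 0 < δ / (2 * K) by positivity)
  refine ⟨min ε₁ ε₂, lt_min hε₁ hε₂, ?_⟩
  filter_upwards [hsolo, tendsto_two_mul_atTop.eventually hcol] with m hsolo hcol σ S hσ hS v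
  have hsmall : ∀ ε, min ε₁ ε₂ ≤ ε → (#S : ℝ) ≤ ε * (2 * m : ℕ) := fun ε hε =>
    hS.trans (mul_le_mul_of_nonneg_right hε (Nat.cast_nonneg _))
  have hmain := neg_le_of_abs_le (hsolo σ S hσ (hsmall ε₁ (min_le_left _ _)) v)
  have hcost := mul_le_mul_of_nonneg_left (hcol σ v S (hsmall ε₂ (min_le_right _ _))) hK.le
  rw [show K * (δ / (2 * K) * Real.log (2 * m : ℕ)) = δ / 2 * Real.log (2 * m : ℕ) by
    field_simp, sum_filter] at hcost
  have hsplit : ∑ e : KSet (2 * m) k, edgeWeight k α β σ e *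
      ((1 - Real.exp (-(t * soloGain σ S v e))) - K * if Collides S v e then 1 else 0) =
        ∑ e : KSet (2 * m) k, edgeWeight k α β σ e * (1 - Real.exp (-(t * soloGain σ S v e))) -
          K * ∑ e : KSet (2 * m) k, if Collides S v e then edgeWeight k α β σ e else 0 := by
    rw [mul_sum, ← sum_sub_distrib]
    exact sum_congr rfl fun e _ => by split_ifs <;> ring
  rw [hsplit, limitExponent]
  linarith

lemma exists_hammingDist_mul_le_chernoffExponent (hk : 2 ≤ k) (hβ : 0 ≤ β) (hβα : β ≤ α) {t δ : ℝ}
    (ht : 0 ≤ t) (hδ : 0 < δ) :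
    ∃ ε : ℝ, 0 < ε ∧ ∀ᶠ m : ℕ in atTop, ∀ σ x : Fin (2 * m) → Bool, balanced σ →
      hammingDist σ x ≤ ε * (2 * m : ℕ) →
        hammingDist σ x * ((limitExponent k α β t - δ) * Real.log (2 * m : ℕ)) ≤
          chernoffExponent (edgeWeight k α β σ) (fun e => objGap σ x e.1) t := by
  set K := Real.exp (t * k ^ 2)
  obtain ⟨ε, hε, hvertex⟩ :=
    exists_mul_log_le_sum_soloGain_sub_collides hk hβ hβα t (Real.exp_pos (t * k ^ 2)) hδ
  refine ⟨ε, hε, ?_⟩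
  filter_upwards [hvertex] with m hvertex σ x hσ hdist
  set S : Finset (Fin (2 * m)) := {i | σ i ≠ x i}
  calc hammingDist σ x * ((limitExponent k α β t - δ) * Real.log (2 * m : ℕ))
      = ∑ _v ∈ S, (limitExponent k α β t - δ) * Real.log (2 * m : ℕ) := by
        rw [sum_const, nsmul_eq_mul]
        rfl
    _ ≤ ∑ v ∈ S, ∑ e : KSet (2 * m) k, edgeWeight k α β σ e *
          ((1 - Real.exp (-(t * soloGain σ S v e))) - K * if Collides S v e then 1 else 0) :=
        sum_le_sum fun v _ => hvertex σ S hσ hdist v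
    _ ≤ chernoffExponent (edgeWeight k α β σ) (fun e => objGap σ x e.1) t := by
        rw [sum_comm]
        refine sum_le_sum fun e _ => ?_
        rw [← mul_sum]
        exact mul_le_mul_of_nonneg_left (sum_soloGain_sub_collides_le (by simp [S, ne_comm]) ht e)
          (edgeWeight_nonneg (hβ.trans hβα) hβ σ e)

lemma sub_sq_le_one_sub_exp_neg {u : ℝ} (hu : |u| ≤ 1) : u - u ^ 2 ≤ 1 - Real.exp (-u) := by
  have h := le_of_abs_le (Real.abs_exp_sub_one_sub_id_le ((abs_neg u).trans_le hu))
  linarith [neg_sq u]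

lemma mul_sum_sub_le_chernoffExponent {ι : Type*} [Fintype ι] {w c : ι → ℝ}
    {B M τ : ℝ} (hw : ∀ e, w e ∈ Set.Icc 0 B) (hc : ∀ e, |c e| ≤ M) (hτ : 0 ≤ τ)
    (hτM : τ * M ≤ 1) :
    τ * ∑ e, w e * c e - (τ * M) ^ 2 * (B * Fintype.card ι) ≤ chernoffExponent w c τ := by
  have hbound : ∑ _e : ι, (τ * M) ^ 2 * B = (τ * M) ^ 2 * (B * Fintype.card ι) := by
    rw [sum_const, card_univ, nsmul_eq_mul]
    ring
  rw [← hbound, mul_sum, ← sum_sub_distrib]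
  refine sum_le_sum fun e _ => ?_
  have hτc : |τ * c e| ≤ τ * M := by
    rw [abs_mul, abs_of_nonneg hτ]
    exact mul_le_mul_of_nonneg_left (hc e) hτ
  have hexp := mul_le_mul_of_nonneg_left (sub_sq_le_one_sub_exp_neg (hτc.trans hτM)) (hw e).1
  have hsq : w e * (τ * c e) ^ 2 ≤ B * (τ * M) ^ 2 :=
    mul_le_mul (hw e).2 (sq_le_sq' (neg_le_of_abs_le hτc) (le_of_abs_le hτc)) (sq_nonneg _)
      ((hw e).1.trans (hw e).2)
  linarith

lemma exists_mul_le_sum_edgeWeight_mul_objGap (hk : 2 ≤ k) (hβα : β < α) {ε : ℝ} (hε : 0 < ε) :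
    ∃ κ : ℝ, 0 < κ ∧ ∀ᶠ m : ℕ in atTop, ∀ σ x : Fin (2 * m) → Bool, balanced σ → balanced x →
      ε * (2 * m : ℕ) ≤ hammingDist σ x → hammingDist σ x ≤ m →
        κ * (m * Real.log (2 * m : ℕ)) ≤
          ∑ e : KSet (2 * m) k, edgeWeight k α β σ e * objGap σ x e.1 := by
  have hk1 : (0 : ℝ) < k - 1 := by linarith [(Nat.ofNat_le_cast (α := ℝ)).2 hk]
  set r : ℝ := (k - 1) / 2 ^ (k - 1)
  have hr : 0 < r := by positivity
  have hαβ : 0 < α - β := sub_pos.2 hβα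
  refine ⟨(α - β) * (r / 2) * ε, by positivity, ?_⟩
  filter_upwards [(tendsto_choose_mul_self_div_choose hk).eventually_const_le (half_lt_self hr),
    eventually_gt_atTop 0] with m hratio hm σ x hσ hx hfar hnear
  have : (0 : ℝ) < m := by exact_mod_cast hm
  have hnear' : (hammingDist σ x : ℝ) ≤ m := by exact_mod_cast hnear
  have := Real.log_natCast_nonneg (2 * m)
  push_cast at hfar
  have hdist : ε * m * m ≤ hammingDist σ x * (2 * m - hammingDist σ x) / 2 := by nlinarith
  have hsum := sum_edgeP_mul_objGap hk (pParam k α (2 * m)) (pParam k β (2 * m)) hσ hx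
  calc (α - β) * (r / 2) * ε * (m * Real.log (2 * m : ℕ))
      = (α - β) * Real.log (2 * m : ℕ) * (r / 2) / m * (ε * m * m) := by field_simp
    _ ≤ (α - β) * Real.log (2 * m : ℕ) *
          (((m - 2).choose (k - 2) : ℝ) * m / (2 * m - 1).choose (k - 1)) / m *
            (hammingDist σ x * (2 * m - hammingDist σ x) / 2) := by gcongr
    _ = ∑ e : KSet (2 * m) k, edgeWeight k α β σ e * objGap σ x e.1 := by
        refine Eq.trans ?_ hsum.symm
        simp only [pParam]
        field_simp

lemma exists_mul_log_le_chernoffExponent (hk : 2 ≤ k) (hβ : 0 ≤ β) (hβα : β < α) {ε : ℝ}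
    (hε : 0 < ε) :
    ∃ τ c : ℝ, 0 < τ ∧ 0 < c ∧ ∀ᶠ m : ℕ in atTop, ∀ σ x : Fin (2 * m) → Bool, balanced σ →
      balanced x → ε * (2 * m : ℕ) ≤ hammingDist σ x → hammingDist σ x ≤ m →
        c * (m * Real.log (2 * m : ℕ)) ≤
          chernoffExponent (edgeWeight k α β σ) (fun e => objGap σ x e.1) τ := by
  obtain ⟨κ, hκ, hmean⟩ := exists_mul_le_sum_edgeWeight_mul_objGap hk hβα hε
  have hα : 0 < α := hβ.trans_lt hβα
  have : (0 : ℝ) < k := by exact_mod_cast two_pos.trans_le hk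
  set τ := min (1 / (k : ℝ) ^ 2) (κ / (4 * α * k ^ 3))
  have hτ : 0 < τ := by positivity
  have hτk : τ * (k : ℝ) ^ 2 ≤ 1 := (le_div_iff₀ (by positivity)).1 (min_le_left _ _)
  have hτκ : τ * (4 * α * k ^ 3) ≤ κ := (le_div_iff₀ (by positivity)).1 (min_le_right _ _)
  refine ⟨τ, τ * κ / 2, hτ, by positivity, ?_⟩
  filter_upwards [hmean, eventually_ge_atTop k] with m hmean hm σ x hσ hx hfar hnear
  have hquad := mul_sum_sub_le_chernoffExponent (c := fun e : KSet (2 * m) k => objGap σ x e.1)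
    (fun e => ⟨edgeWeight_nonneg hα.le hβ σ e, edgeWeight_le hβα.le σ e⟩)
    (fun e => (abs_objGap_le σ x e.1).trans_eq (by rw [e.2])) hτ.le hτk
  rw [pParam_mul_card (by omega) α (by omega : k ≤ 2 * m)] at hquad
  refine le_trans ?_ hquad
  have hmL : 0 ≤ (m : ℝ) * Real.log (2 * m : ℕ) :=
    mul_nonneg m.cast_nonneg (Real.log_natCast_nonneg _)
  have hsecond : (τ * (k : ℝ) ^ 2) ^ 2 * (α * Real.log (2 * m : ℕ) * (2 * m : ℕ) / k) =
      τ * (τ * (4 * α * k ^ 3)) / 2 * (m * Real.log (2 * m : ℕ)) := by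
    push_cast
    field_simp
    ring
  have hsmall := mul_le_mul_of_nonneg_right (mul_le_mul_of_nonneg_left hτκ hτ.le) hmL
  have hlinear := mul_le_mul_of_nonneg_left (hmean σ x hσ hx hfar hnear) hτ.le
  rw [hsecond]
  linarith

lemma balanced_negB {n : ℕ} {x : Fin n → Bool} (hx : balanced x) : balanced (negB x) := by
  have hcard := card_filter_add_card_filter_not (s := univ) (fun i => x i = true)
  simp only [card_univ, Fintype.card_fin, Bool.not_eq_true] at hcard
  simp only [balanced, negB, Bool.not_eq_true'] at hx ⊢
  omega

lemma negB_negB {n : ℕ} (x : Fin n → Bool) : negB (negB x) = x :=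
  funext fun i => Bool.not_not (x i)

lemma hammingDist_negB_add {n : ℕ} (σ x : Fin n → Bool) :
    hammingDist σ (negB x) + hammingDist σ x = n := by
  have hcard := card_filter_add_card_filter_not (s := univ) (fun i => σ i ≠ negB x i)
  simp only [card_univ, Fintype.card_fin, negB, ne_eq, Bool.eq_not, not_not] at hcard
  simpa only [hammingDist, negB, ne_eq, Bool.eq_not, not_not] using hcard

lemma eq_or_eq_negB_of_forall_weightedCount_pos {m : ℕ} {σ : Fin (2 * m) → Bool}
    {est : (KSet (2 * m) k → Bool) → Fin (2 * m) → Bool} (hσ : balanced σ) (hest : isTruncMax est)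
    {E : KSet (2 * m) k → Bool} (h : ∀ x, balanced x → x ≠ σ → hammingDist σ x ≤ m →
      0 < weightedCount (fun e => objGap σ x e.1) E) :
    est E = σ ∨ est E = negB σ := by
  obtain ⟨hbal, hmax⟩ := hest E
  have hgap : weightedCount (fun e => objGap σ (est E) e.1) E ≤ 0 := by
    linarith [truncObj_sub_truncObj E σ (est E), hmax σ hσ]
  by_contra! hne
  rcases le_total (hammingDist σ (est E)) m with hnear | hfar
  · exact hgap.not_gt (h _ hbal hne.1 hnear)
  · have hflip := h (negB (est E)) (balanced_negB hbal)
      (fun heq => hne.2 (by rw [← heq, negB_negB]))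
      (by have := hammingDist_negB_add σ (est E); omega)
    simp only [objGap_negB] at hflip
    exact hgap.not_gt hflip

lemma sum_pow_hammingDist {n : ℕ} (σ : Fin n → Bool) (y : ℝ) :
    ∑ x, y ^ hammingDist σ x = (1 + y) ^ n := by
  have hprod := prod_univ_sum (fun _ : Fin n => (univ : Finset Bool))
    fun i b => if σ i ≠ b then y else 1
  have hfactor : ∀ i, (∑ b, if σ i ≠ b then y else 1) = 1 + y := fun i => by
    cases σ i <;> simp [add_comm]
  simp only [hfactor, prod_const, card_univ, Fintype.card_fin, Fintype.piFinset_univ] at hprod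
  rw [hprod]
  refine sum_congr rfl fun x _ => ?_
  rw [← prod_filter, prod_const, hammingDist]

lemma sum_pow_hammingDist_add_le {n : ℕ} {σ : Fin n → Bool} {X : Finset (Fin n → Bool)}
    (hX : σ ∉ X) {y b : ℝ} (hy : 0 ≤ y) (hb : 0 ≤ b) :
    ∑ x ∈ X, (y ^ hammingDist σ x + b) ≤ (1 + y) ^ n - 1 + 2 ^ n * b := by
  have hinsert : ∑ x ∈ insert σ X, y ^ hammingDist σ x ≤ (1 + y) ^ n :=
    (sum_le_univ_sum_of_nonneg fun x => pow_nonneg hy _).trans_eq (sum_pow_hammingDist σ y)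
  rw [sum_insert hX, hammingDist_self, pow_zero] at hinsert
  have hcard : (#X : ℝ) ≤ 2 ^ n := by
    exact_mod_cast (card_le_univ X).trans_eq (by simp)
  rw [sum_add_distrib, sum_const, nsmul_eq_mul]
  linarith [mul_le_mul_of_nonneg_right hcard hb]

lemma one_add_exp_neg_mul_log_pow_le {n : ℕ} (hn : n ≠ 0) (δ : ℝ) :
    (1 + Real.exp (-((1 + δ) * Real.log n))) ^ n ≤ Real.exp (Real.exp (-(δ * Real.log n))) := by
  have hn0 : (0 : ℝ) < n := by positivity
  calc (1 + Real.exp (-((1 + δ) * Real.log n))) ^ n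
      ≤ Real.exp (Real.exp (-((1 + δ) * Real.log n))) ^ n := by
        rw [add_comm]
        exact pow_le_pow_left₀ (by positivity) (Real.add_one_le_exp _) n
    _ = Real.exp (Real.exp (Real.log n) * Real.exp (-((1 + δ) * Real.log n))) := by
        rw [← Real.exp_nat_mul, Real.exp_log hn0]
    _ = Real.exp (Real.exp (-(δ * Real.log n))) := by
        rw [← Real.exp_add]
        ring_nf

lemma tendsto_two_pow_mul_exp_neg {c : ℝ} (hc : 0 < c) :
    Tendsto (fun m : ℕ => 2 ^ (2 * m) * Real.exp (-(c * (m * Real.log (2 * m : ℕ))))) atTop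
      (nhds 0) := by
  have hexp : Tendsto (fun m : ℕ => Real.exp (-(m : ℝ))) atTop (nhds 0) :=
    Real.tendsto_exp_neg_atTop_nhds_zero.comp tendsto_natCast_atTop_atTop
  refine squeeze_zero' (Eventually.of_forall fun m => by positivity) ?_ hexp
  filter_upwards [(tendsto_log_two_mul.const_mul_atTop hc).eventually_ge_atTop 3] with m hm
  have htwo : (2 : ℝ) ^ (2 * m) ≤ Real.exp (2 * m) := by
    have h := pow_le_pow_left₀ (by norm_num) (Real.add_one_le_exp 1) (2 * m)
    rwa [← Real.exp_nat_mul, one_add_one_eq_two, mul_one, Nat.cast_mul, Nat.cast_ofNat] at h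
  calc 2 ^ (2 * m) * Real.exp (-(c * (m * Real.log (2 * m : ℕ))))
      ≤ Real.exp (2 * m) * Real.exp (-(c * (m * Real.log (2 * m : ℕ)))) := by gcongr
    _ = Real.exp (2 * m - c * Real.log (2 * m : ℕ) * m) := by
        rw [← Real.exp_add]
        ring_nf
    _ ≤ Real.exp (-m) := by
        gcongr
        nlinarith [(m.cast_nonneg : (0 : ℝ) ≤ m)]

lemma exists_bernoulliProb_weightedCount_objGap_nonpos_le (hk : 2 ≤ k) (hβ : 0 ≤ β) (hβα : β < α)
    (hI : 1 < I2def k α β) :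
    ∃ δ c : ℝ, 0 < δ ∧ 0 < c ∧ ∀ᶠ m : ℕ in atTop, ∀ σ x : Fin (2 * m) → Bool, balanced σ →
      balanced x → hammingDist σ x ≤ m →
        bernoulliProb (edgeWeight k α β σ)
          (fun E => weightedCount (fun e => objGap σ x e.1) E ≤ 0) ≤
            Real.exp (-((1 + δ) * Real.log (2 * m : ℕ))) ^ hammingDist σ x +
              Real.exp (-(c * (m * Real.log (2 * m : ℕ)))) := by
  obtain ⟨t, ht, hIt⟩ := exists_lt_limitExponent (by omega) hI
  obtain ⟨δ, hδ, hIδ⟩ : ∃ δ, 0 < δ ∧ limitExponent k α β t - δ = 1 + δ :=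
    ⟨(limitExponent k α β t - 1) / 2, by linarith, by ring⟩
  obtain ⟨ε, hε, hsmall⟩ := exists_hammingDist_mul_le_chernoffExponent hk hβ hβα.le ht hδ
  obtain ⟨τ, c, hτ, hc, hlarge⟩ := exists_mul_log_le_chernoffExponent hk hβ hβα hε
  refine ⟨δ, c, hδ, hc, ?_⟩
  filter_upwards [hsmall, hlarge, eventually_edgeWeight_mem_Icc hk hβ hβα.le one_pos]
    with m hsmall hlarge hw σ x hσ hx hdist
  rcases le_total (hammingDist σ x : ℝ) (ε * (2 * m : ℕ)) with hnear | hfar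
  · refine (bernoulliProb_weightedCount_nonpos_le (hw σ) _ ht).trans
      (le_add_of_le_of_nonneg ?_ (Real.exp_pos _).le)
    rw [← Real.exp_nat_mul, Real.exp_le_exp, mul_neg, neg_le_neg_iff, ← hIδ]
    exact hsmall σ x hσ hnear
  · exact (bernoulliProb_weightedCount_nonpos_le (hw σ) _ hτ.le).trans
      (le_add_of_nonneg_of_le (by positivity)
        (Real.exp_le_exp.2 (neg_le_neg (hlarge σ x hσ hx hfar hdist))))

theorem eventually_one_sub_le_bernoulliProb_eq_or_eq_negB (hk : 2 ≤ k) (hβ : 0 ≤ β) (hβα : β < α)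
    (hI : 1 < I2def k α β) {η : ℝ} (hη : 0 < η) :
    ∀ᶠ m : ℕ in atTop, ∀ σ : Fin (2 * m) → Bool, balanced σ →
      ∀ est : (KSet (2 * m) k → Bool) → Fin (2 * m) → Bool, isTruncMax est →
        1 - η ≤ bernoulliProb (edgeWeight k α β σ) fun E => est E = σ ∨ est E = negB σ := by
  obtain ⟨δ, c, hδ, hc, hbound⟩ := exists_bernoulliProb_weightedCount_objGap_nonpos_le hk hβ hβα hI
  have hexp : Tendsto (fun m : ℕ => Real.exp (Real.exp (-(δ * Real.log (2 * m : ℕ)))) - 1) atTop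
      (nhds 0) := by
    have h := (Real.continuous_exp.tendsto 0).comp (Real.tendsto_exp_neg_atTop_nhds_zero.comp
      (tendsto_log_two_mul.const_mul_atTop hδ))
    simpa using h.sub_const 1
  have hlim := hexp.add (tendsto_two_pow_mul_exp_neg hc)
  rw [add_zero] at hlim
  filter_upwards [hbound, hlim.eventually_le_const hη, eventually_gt_atTop 0,
    eventually_edgeWeight_mem_Icc hk hβ hβα.le one_pos] with m hbound hη hm hw σ hσ est hest
  set X : Finset (Fin (2 * m) → Bool) := {x | balanced x ∧ x ≠ σ ∧ hammingDist σ x ≤ m}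
  have hX : ∀ x ∈ X, balanced x ∧ x ≠ σ ∧ hammingDist σ x ≤ m := fun x hx => (mem_filter.1 hx).2
  have hunion := one_sub_sum_bernoulliProb_le (hw σ) X
    (P := fun x E => weightedCount (fun e => objGap σ x e.1) E ≤ 0)
    (Q := fun E => est E = σ ∨ est E = negB σ) fun E hE =>
      eq_or_eq_negB_of_forall_weightedCount_pos hσ hest fun x hx hne hdist =>
        not_le.1 (hE x (mem_filter.2 ⟨mem_univ x, hx, hne, hdist⟩))
  refine (sub_le_sub_left ?_ 1).trans hunion
  set L := Real.log (2 * m : ℕ)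
  set y := Real.exp (-((1 + δ) * L))
  set b := Real.exp (-(c * (m * L)))
  calc ∑ x ∈ X, bernoulliProb (edgeWeight k α β σ)
        (fun E => weightedCount (fun e => objGap σ x e.1) E ≤ 0)
      ≤ ∑ x ∈ X, (y ^ hammingDist σ x + b) :=
        sum_le_sum fun x hx => hbound σ x hσ (hX x hx).1 (hX x hx).2.2
    _ ≤ (1 + y) ^ (2 * m) - 1 + 2 ^ (2 * m) * b :=
        sum_pow_hammingDist_add_le (fun h => (hX σ h).2.1 rfl) (Real.exp_pos _).le
          (Real.exp_pos _).le
    _ ≤ Real.exp (Real.exp (-(δ * L))) - 1 + 2 ^ (2 * m) * b := by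
        gcongr
        exact one_add_exp_neg_mul_log_pow_le (by omega) δ
    _ ≤ η := hη

end Recovery

/-! ### Failure below the threshold -/

section Failure

variable {n k : ℕ} {α β : ℝ}

/-- No edge of the hypergraph `E` joins `v` to another vertex of `A`. -/
def Clean (A : Finset (Fin n)) (v : Fin n) (E : KSet n k → Bool) : Prop :=
  ∀ e, E e = true → ¬ Collides A v e

lemma balanced_comp_equiv {σ : Fin n → Bool} (hσ : balanced σ) (π : Equiv.Perm (Fin n)) :
    balanced (σ ∘ π) := by
  unfold balanced at hσ ⊢
  rw [card_equiv (t := {i | σ i = true}) π (by simp), hσ]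

lemma objGap_comp_swap {σ : Fin n → Bool} {A : Finset (Fin n)} {i j : Fin n} (hj : j ∈ A)
    (hij : σ i ≠ σ j) {e : KSet n k} (hei : ¬ Collides A i e) (hej : ¬ Collides A j e) :
    objGap σ (σ ∘ Equiv.swap i j) e.1 = soloGain σ A i e + soloGain σ A j e := by
  have hne : i ≠ j := fun h => hij (congrArg σ h)
  have hfix : ∀ l, l ≠ i → l ≠ j → (σ ∘ Equiv.swap i j) l = σ l := fun l hli hlj => by
    simp [Equiv.swap_apply_of_ne_of_ne hli hlj]
  by_cases hie : i ∈ e.1 <;> by_cases hje : j ∈ e.1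
  · exact absurd ⟨hie, j, hj, hne.symm, hje⟩ hei
  · rw [objGap_eq_gain hie (by simpa using hij.symm) fun l hl hli =>
      hfix l hli fun h => hje (h ▸ hl)]
    simp [soloGain, hie, hje, hei, e.2]
  · rw [objGap_eq_gain hje (by simpa using hij) fun l hl hlj =>
      hfix l (fun h => hie (h ▸ hl)) hlj]
    simp [soloGain, hie, hje, hej, e.2]
  · rw [objGap_eq_zero fun l hl => hfix l (fun h => hie (h ▸ hl)) fun h => hje (h ▸ hl)]
    simp [soloGain, hie, hje]

lemma truncObj_negB (E : KSet n k → Bool) (σ : Fin n → Bool) :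
    truncObj E (negB σ) = truncObj E σ := by
  simp [truncObj_eq_weightedCount, labelSum_negB]

lemma ne_and_ne_negB_of_clean {σ : Fin n → Bool} (hσ : balanced σ)
    {est : (KSet n k → Bool) → Fin n → Bool} (hest : isTruncMax est) {A : Finset (Fin n)}
    {i j : Fin n} (hj : j ∈ A) (hij : σ i ≠ σ j) {E : KSet n k → Bool}
    (hEi : Clean A i E) (hEj : Clean A j E) (hgi : weightedCount (soloGain σ A i) E < 0)
    (hgj : weightedCount (soloGain σ A j) E < 0) : est E ≠ σ ∧ est E ≠ negB σ := by
  have hsplit : weightedCount (fun e : KSet n k => objGap σ (σ ∘ Equiv.swap i j) e.1) E =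
      weightedCount (soloGain σ A i) E + weightedCount (soloGain σ A j) E := by
    simp only [weightedCount]
    rw [← sum_add_distrib]
    refine sum_congr rfl fun e _ => ?_
    split_ifs with he
    · exact objGap_comp_swap hj hij (hEi e he) (hEj e he)
    · rw [add_zero]
  have hgap := truncObj_sub_truncObj E σ (σ ∘ Equiv.swap i j)
  have hmax := (hest E).2 _ (balanced_comp_equiv hσ (Equiv.swap i j))
  constructor <;> rintro h <;> rw [h] at hmax
  · linarith
  · linarith [truncObj_negB E σ]

lemma dependsOn_weightedCount_soloGain_neg (σ : Fin n → Bool) (A : Finset (Fin n)) (v : Fin n) :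
    DependsOn (fun E : KSet n k → Bool => weightedCount (soloGain σ A v) E < 0)
      {e | v ∈ e.1 ∧ ¬ Collides A v e} := by
  intro E E' h
  have hcount : weightedCount (soloGain σ A v) E = weightedCount (soloGain σ A v) E' := by
    refine sum_congr rfl fun e _ => ?_
    by_cases he : v ∈ e.1 ∧ ¬ Collides A v e
    · rw [h e he]
    · simp [soloGain, if_neg he]
  simp only [hcount]

lemma dependsOn_clean {A : Finset (Fin n)} {v : Fin n} (hv : v ∈ A) :
    DependsOn (Clean (k := k) A v) {e | ∃ u ∈ A, u ∈ e.1 ∧ ¬ Collides A u e}ᶜ := by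
  intro E E' h
  have hcollide : ∀ e : KSet n k, Collides A v e → E e = E' e := by
    rintro e ⟨hve, j, hj, hjv, hje⟩
    refine h e ?_
    rintro ⟨u, -, hue, hu⟩
    rcases eq_or_ne u v with rfl | huv
    · exact hu ⟨hue, j, hj, hjv, hje⟩
    · exact hu ⟨hue, v, hv, huv.symm, hve⟩
  refine propext (forall_congr' fun e => ?_)
  by_cases he : Collides A v e
  · rw [hcollide e he]
  · simp [he]

lemma pairwiseDisjoint_solo (A : Finset (Fin n)) :
    (A : Set (Fin n)).PairwiseDisjoint
      fun v => {e : KSet n k | v ∈ e.1 ∧ ¬ Collides A v e} := by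
  intro u _ v hv huv
  exact Set.disjoint_left.2 fun e hu hv' => hu.2 ⟨hu.1, v, hv, huv.symm, hv'.1⟩

lemma one_sub_sum_collides_le_bernoulliProb_clean {w : KSet n k → ℝ}
    (hw : ∀ e, w e ∈ Set.Icc (0 : ℝ) 1) (A : Finset (Fin n)) (v : Fin n) :
    1 - ∑ e with Collides A v e, w e ≤ bernoulliProb w (Clean A v) := by
  have h := one_sub_sum_bernoulliProb_le hw {e | Collides A v e} (P := fun e E => E e = true)
    (Q := Clean A v) fun E hE e he hc => hE e (mem_filter.2 ⟨mem_univ e, hc⟩) he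
  simpa only [bernoulliProb_coord] using h

lemma one_sub_exp_le_bernoulliProb_exists_soloGain_neg {w : KSet n k → ℝ}
    (hw : ∀ e, w e ∈ Set.Icc (0 : ℝ) 1) (σ : Fin n → Bool) {A B : Finset (Fin n)} (hBA : B ⊆ A)
    {π : ℝ} (hπ : ∀ v ∈ B, π ≤ bernoulliProb w fun E => weightedCount (soloGain σ A v) E < 0) :
    1 - Real.exp (-(#B * π)) ≤
      bernoulliProb w fun E => ∃ v ∈ B, weightedCount (soloGain σ A v) E < 0 := by
  have h := bernoulliProb_forall_not_le_exp hw B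
    ((pairwiseDisjoint_solo A).subset (coe_subset.2 hBA))
    (fun v _ => dependsOn_weightedCount_soloGain_neg σ A v) hπ
  have hnot := bernoulliProb_not w fun E => ∃ v ∈ B, weightedCount (soloGain σ A v) E < 0
  simp only [not_exists, not_and] at hnot
  linarith

/-- Whether a vertex of `A` prefers to move depends only on edges with one vertex in `A`, and
whether it is clean on the other edges. -/
lemma le_bernoulliProb_exists_soloGain_neg_and_clean {w : KSet n k → ℝ}
    (hw : ∀ e, w e ∈ Set.Icc (0 : ℝ) 1) (σ : Fin n → Bool) {A B C : Finset (Fin n)} (hB : B ⊆ A)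
    (hC : C ⊆ A) {π κ : ℝ} (hκ : 2 * κ ≤ 1)
    (hπ : ∀ v ∈ A, π ≤ bernoulliProb w fun E => weightedCount (soloGain σ A v) E < 0)
    (hclean : ∀ v ∈ A, ∑ e with Collides A v e, w e ≤ κ) :
    (1 - 2 * κ) * (1 - Real.exp (-(#B * π)) - Real.exp (-(#C * π))) ≤
      bernoulliProb w fun E => ∃ p ∈ (B : Set (Fin n)) ×ˢ (C : Set (Fin n)),
        (weightedCount (soloGain σ A p.1) E < 0 ∧ weightedCount (soloGain σ A p.2) E < 0) ∧
          Clean A p.1 E ∧ Clean A p.2 E := by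
  refine le_trans ?_ (mul_bernoulliProb_exists_le hw (c := 1 - 2 * κ)
    (S := {e | ∃ u ∈ A, u ∈ e.1 ∧ ¬ Collides A u e}) ?_ ?_ ?_)
  · refine mul_le_mul_of_nonneg_left ?_ (by linarith)
    have hBπ := one_sub_exp_le_bernoulliProb_exists_soloGain_neg hw σ hB fun v hv => hπ v (hB hv)
    have hCπ := one_sub_exp_le_bernoulliProb_exists_soloGain_neg hw σ hC fun v hv => hπ v (hC hv)
    have hand := bernoulliProb_add_sub_one_le hw
      (fun E => ∃ v ∈ B, weightedCount (soloGain σ A v) E < 0)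
      fun E => ∃ v ∈ C, weightedCount (soloGain σ A v) E < 0
    refine le_trans (by linarith) (hand.trans (bernoulliProb_mono hw ?_))
    rintro E ⟨⟨u, hu, hgu⟩, v, hv, hgv⟩
    exact ⟨(u, v), ⟨hu, hv⟩, hgu, hgv⟩
  · rintro ⟨u, v⟩ ⟨hu, hv⟩ E E' h
    have hgu := dependsOn_weightedCount_soloGain_neg σ A u fun e he => h e ⟨u, hB hu, he⟩
    have hgv := dependsOn_weightedCount_soloGain_neg σ A v fun e he => h e ⟨v, hC hv, he⟩
    exact congrArg₂ And hgu hgv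
  · rintro ⟨u, v⟩ ⟨hu, hv⟩ E E' h
    exact congrArg₂ And (dependsOn_clean (hB hu) h) (dependsOn_clean (hC hv) h)
  · rintro ⟨u, v⟩ ⟨hu, hv⟩
    have hcu := one_sub_sum_collides_le_bernoulliProb_clean hw A u
    have hcv := one_sub_sum_collides_le_bernoulliProb_clean hw A v
    have hand := bernoulliProb_add_sub_one_le hw (Clean A u) (Clean A v)
    linarith [hclean u (hB hu), hclean v (hC hv)]

lemma abs_soloGain_le (σ : Fin n → Bool) (A : Finset (Fin n)) (v : Fin n) (e : KSet n k) :
    |soloGain σ A v e| ≤ k := by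
  unfold soloGain
  split_ifs with h
  · exact abs_gain_le ((oppositeCount_lt_card σ h.1).trans_eq e.2)
  · simp

lemma abs_one_sub_exp_neg_mul_le {x b : ℝ} (hx : |x| ≤ b) (t : ℝ) :
    |1 - Real.exp (-(t * x))| ≤ 1 + Real.exp (|t| * b) := by
  have hexp : Real.exp (-(t * x)) ≤ Real.exp (|t| * b) := Real.exp_le_exp.2 <|
    (neg_le_abs _).trans ((abs_mul t x).trans_le (mul_le_mul_of_nonneg_left hx (abs_nonneg t)))
  rw [abs_le]
  constructor <;> linarith [Real.exp_pos (-(t * x))]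

lemma sum_sq_mul_le {ι : Type*} [Fintype ι] {w : ι → ℝ} {c : ℝ} (hw : ∀ e, w e ∈ Set.Icc 0 c)
    (f : ι → ℝ) : ∑ e, (w e * f e) ^ 2 ≤ c * ∑ e, w e * f e ^ 2 := by
  rw [mul_sum]
  refine sum_le_sum fun e _ => ?_
  nlinarith [mul_le_mul_of_nonneg_right (hw e).2 (mul_nonneg (hw e).1 (sq_nonneg (f e)))]

lemma exists_bernoulliExp_exp_soloGain_mem_Icc (hk : 2 ≤ k) (hβ : 0 ≤ β) (hβα : β ≤ α) (t : ℝ)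
    {δ : ℝ} (hδ : 0 < δ) :
    ∃ ε : ℝ, 0 < ε ∧ ∀ᶠ m : ℕ in atTop, ∀ (σ : Fin (2 * m) → Bool) (A : Finset (Fin (2 * m))),
      balanced σ → #A ≤ ε * (2 * m : ℕ) → ∀ v,
        bernoulliExp (edgeWeight k α β σ)
          (fun E => Real.exp (-(t * weightedCount (soloGain σ A v) E))) ∈
            Set.Icc (Real.exp (-((limitExponent k α β t + δ) * Real.log (2 * m : ℕ))))
              (Real.exp (-((limitExponent k α β t - δ) * Real.log (2 * m : ℕ)))) := by
  set φ : ℝ → ℝ := fun x => 1 - Real.exp (-(t * x)) with hφ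
  set G := ∑ a ∈ range k, profileRate k α β a * φ (gain k a) ^ 2
  have hG : 0 ≤ G := sum_nonneg fun a _ =>
    mul_nonneg (profileRate_nonneg (hβ.trans hβα) hβ a) (sq_nonneg _)
  set K := 1 + Real.exp (|t| * k)
  have hK : 0 < K := by positivity
  set c := min (1 / (2 * K)) (δ / (4 * (G + 1)))
  have hc : 0 < c := lt_min (by positivity) (by positivity)
  have hcK : c * K ≤ 1 / 2 :=
    (mul_le_mul_of_nonneg_right (min_le_left _ _) hK.le).trans_eq (by field_simp)
  have hcG : c * (G + 1) ≤ δ / 4 :=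
    (mul_le_mul_of_nonneg_right (min_le_right _ _) (by positivity)).trans_eq (by field_simp)
  obtain ⟨ε₁, hε₁, hlin⟩ := exists_abs_sum_edgeWeight_soloGain_sub_le hk hβ hβα (φ := φ)
    (by simp [hφ]) (half_pos hδ)
  obtain ⟨ε₂, hε₂, hquad⟩ := exists_abs_sum_edgeWeight_soloGain_sub_le hk hβ hβα
    (φ := fun x => φ x ^ 2) (by simp [hφ]) one_pos
  refine ⟨min ε₁ ε₂, lt_min hε₁ hε₂, ?_⟩
  filter_upwards [hlin, hquad, eventually_edgeWeight_mem_Icc hk hβ hβα hc,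
    eventually_edgeWeight_mem_Icc hk hβ hβα one_pos] with m hlin hquad hwc hw σ A hσ hA v
  have hL := Real.log_natCast_nonneg (2 * m)
  set L := Real.log (2 * m : ℕ)
  have hsmall : ∀ ε, min ε₁ ε₂ ≤ ε → #A ≤ ε * (2 * m : ℕ) := fun ε hε =>
    hA.trans (mul_le_mul_of_nonneg_right hε (Nat.cast_nonneg _))
  obtain ⟨hlower, hupper⟩ := abs_le.1 (hlin σ A hσ (hsmall ε₁ (min_le_left _ _)) v)
  have hsq := le_of_abs_le (hquad σ A hσ (hsmall ε₂ (min_le_right _ _)) v)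
  change -_ ≤ chernoffExponent (edgeWeight k α β σ) (soloGain σ A v) t -
    limitExponent k α β t * L at hlower
  change chernoffExponent (edgeWeight k α β σ) (soloGain σ A v) t -
    limitExponent k α β t * L ≤ _ at hupper
  constructor
  · refine le_trans (Real.exp_le_exp.2 ?_)
      (exp_le_bernoulliExp_exp_weightedCount _ _ _ fun e => ?_)
    · have hbound := (sum_sq_mul_le (hwc σ) fun e => φ (soloGain σ A v e)).trans
        (mul_le_mul_of_nonneg_left (show _ ≤ (G + 1) * L by linarith) hc.le)
      simp only [hφ] at hbound
      linarith [mul_le_mul_of_nonneg_right hcG hL]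
    · rw [abs_mul, abs_of_nonneg (hwc σ e).1]
      exact (mul_le_mul (hwc σ e).2 (abs_one_sub_exp_neg_mul_le (abs_soloGain_le σ A v e) t)
        (abs_nonneg _) hc.le).trans hcK
  · refine (bernoulliExp_exp_weightedCount_le (hw σ) _ t).trans (Real.exp_le_exp.2 ?_)
    linarith [mul_nonneg hδ.le hL]

lemma exists_exp_le_bernoulliProb_soloGain_neg (hk : 2 ≤ k) (hβ : 0 < β) (hβα : β < α)
    (hI : I2def k α β < 1) :
    ∃ δ ε : ℝ, 0 < δ ∧ 0 < ε ∧ ∀ᶠ m : ℕ in atTop, ∀ (σ : Fin (2 * m) → Bool)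
      (A : Finset (Fin (2 * m))), balanced σ → #A ≤ ε * (2 * m : ℕ) → ∀ v,
        Real.exp (-((1 - δ) * Real.log (2 * m : ℕ))) ≤ bernoulliProb (edgeWeight k α β σ)
          fun E => weightedCount (soloGain σ A v) E < 0 := by
  obtain ⟨t, s, η, δ, ht, hs, hδ, hmain, hleft, hright⟩ := exists_tilting_parameters hk hβ hβα hI
  have hmgf := fun u => exists_bernoulliExp_exp_soloGain_mem_Icc hk hβ.le hβα.le u hδ
  obtain ⟨ε₁, hε₁, hmgf₁⟩ := hmgf t
  obtain ⟨ε₂, hε₂, hmgf₂⟩ := hmgf (t - s)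
  obtain ⟨ε₃, hε₃, hmgf₃⟩ := hmgf (t + s)
  refine ⟨δ, min ε₁ (min ε₂ ε₃), hδ, lt_min hε₁ (lt_min hε₂ hε₃), ?_⟩
  filter_upwards [hmgf₁, hmgf₂, hmgf₃,
    (tendsto_log_two_mul.const_mul_atTop hδ).eventually_ge_atTop 2,
    eventually_edgeWeight_mem_Icc hk hβ.le hβα.le one_pos]
    with m hmgf₁ hmgf₂ hmgf₃ hL hw σ A hσ hA v
  have hsmall : ∀ ε, min ε₁ (min ε₂ ε₃) ≤ ε → #A ≤ ε * (2 * m : ℕ) := fun ε hε =>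
    hA.trans (mul_le_mul_of_nonneg_right hε (Nat.cast_nonneg _))
  have hcenter := (hmgf₁ σ A hσ (hsmall ε₁ (by simp)) v).1
  have hminus := (hmgf₂ σ A hσ (hsmall ε₂ (by simp)) v).2
  have hplus := (hmgf₃ σ A hσ (hsmall ε₃ (by simp)) v).2
  have hL0 := Real.log_natCast_nonneg (2 * m)
  set L := Real.log (2 * m : ℕ)
  set I := limitExponent k α β t
  set x := Real.exp (-((I + 2 * δ) * L))
  have hthree : 3 * x ≤ Real.exp (-((I + δ) * L)) := by
    calc 3 * x ≤ Real.exp (δ * L) * x := by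
          gcongr
          linarith [Real.add_one_le_exp (δ * L)]
      _ = Real.exp (-((I + δ) * L)) := by
          rw [← Real.exp_add]
          ring_nf
  have hminusx := hminus.trans (Real.exp_le_exp.2
    (show -((limitExponent k α β (t - s) - δ) * L) ≤ -((I + 2 * δ) * L) by nlinarith))
  have hplusx : Real.exp (-(s * (η * L))) * bernoulliExp (edgeWeight k α β σ)
      (fun E => Real.exp (-((t + s) * weightedCount (soloGain σ A v) E))) ≤ x := by
    refine (mul_le_mul_of_nonneg_left hplus (Real.exp_pos _).le).trans ?_
    rw [← Real.exp_add]
    exact Real.exp_le_exp.2 (by nlinarith)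
  refine le_trans ?_ (le_bernoulliProb_weightedCount_neg (hw σ) _ ht.le hs.le (η := η * L))
  calc Real.exp (-((1 - δ) * L)) ≤ Real.exp (-(t * (η * L))) * x := by
        rw [← Real.exp_add]
        exact Real.exp_le_exp.2 (by nlinarith)
    _ ≤ _ := mul_le_mul_of_nonneg_left (by linarith) (Real.exp_pos _).le

lemma exists_block_size {δ : ℝ} (hδ : 0 < δ) :
    ∃ r : ℕ → ℕ, (∀ n : ℕ, Real.exp ((1 - δ) * Real.log n) ≤ r n) ∧
      Tendsto (fun n : ℕ => r n * (Real.log n / (n - 1))) atTop (nhds 0) := by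
  refine ⟨fun n => ⌈Real.exp ((1 - δ) * Real.log n)⌉₊, fun n => Nat.le_ceil _, ?_⟩
  have hexp : Tendsto (fun x : ℝ => x * Real.exp (-(δ * x))) atTop (nhds 0) := by
    have h := ((Real.tendsto_pow_mul_exp_neg_atTop_nhds_zero 1).comp
      (tendsto_id.const_mul_atTop hδ)).const_mul δ⁻¹
    rw [mul_zero] at h
    refine h.congr fun x => ?_
    simp only [Function.comp, id, pow_one]
    field_simp
  have hlim := ((hexp.comp (Real.tendsto_log_atTop.comp tendsto_natCast_atTop_atTop)).const_mul
    2).add tendsto_log_div_sub_one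
  rw [mul_zero, add_zero] at hlim
  refine squeeze_zero' ?_ ?_ hlim <;> filter_upwards [eventually_ge_atTop 2] with n hn
  all_goals
    have hn2 : (2 : ℝ) ≤ n := by exact_mod_cast hn
    have hL := Real.log_natCast_nonneg n
    have hratio : 0 ≤ Real.log n / ((n : ℝ) - 1) := div_nonneg hL (by linarith)
  · positivity
  · have hpow : Real.exp ((1 - δ) * Real.log n) = n * Real.exp (-(δ * Real.log n)) := by
      rw [sub_mul, one_mul, sub_eq_add_neg, Real.exp_add, Real.exp_log (by linarith)]
    have hdouble : n * (Real.log n / (n - 1)) ≤ 2 * Real.log n := by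
      rw [mul_div_assoc', div_le_iff₀ (by linarith)]
      nlinarith
    calc ⌈Real.exp ((1 - δ) * Real.log n)⌉₊ * (Real.log n / (n - 1))
        ≤ (n * Real.exp (-(δ * Real.log n)) + 1) * (Real.log n / (n - 1)) := by
          rw [← hpow]
          exact mul_le_mul_of_nonneg_right (Nat.ceil_lt_add_one (Real.exp_pos _).le).le hratio
      _ = n * (Real.log n / (n - 1)) * Real.exp (-(δ * Real.log n)) +
            Real.log n / (n - 1) := by ring
      _ ≤ 2 * Real.log n * Real.exp (-(δ * Real.log n)) + Real.log n / (n - 1) := by gcongr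
      _ = _ := by
          rw [mul_assoc]
          rfl

lemma eventually_natCast_le_of_tendsto {r : ℕ → ℕ}
    (hr : Tendsto (fun n : ℕ => r n * (Real.log n / (n - 1))) atTop (nhds 0)) {c : ℝ}
    (hc : 0 < c) : ∀ᶠ n : ℕ in atTop, (r n : ℝ) ≤ c * n := by
  filter_upwards [hr.eventually_le_const hc, eventually_ge_atTop 2,
    (Real.tendsto_log_atTop.comp tendsto_natCast_atTop_atTop).eventually_ge_atTop 1]
    with n hrn hn hlog
  have hn2 : (2 : ℝ) ≤ n := by exact_mod_cast hn
  rw [← mul_div_assoc, div_le_iff₀ (by linarith)] at hrn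
  have : (r n : ℝ) ≤ r n * Real.log n := le_mul_of_one_le_right (Nat.cast_nonneg _) hlog
  linarith

lemma exists_blocks {m r : ℕ} {σ : Fin (2 * m) → Bool} (hσ : balanced σ) (hr : r ≤ m) :
    ∃ B C : Finset (Fin (2 * m)), #B = r ∧ #C = r ∧ ∀ i ∈ B, ∀ j ∈ C, σ i ≠ σ j := by
  obtain ⟨B, hB, hBr⟩ := exists_subset_card_eq (hr.trans_eq (card_label_eq hσ true).symm)
  obtain ⟨C, hC, hCr⟩ := exists_subset_card_eq (hr.trans_eq (card_label_eq hσ false).symm)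
  refine ⟨B, C, hBr, hCr, fun i hi j hj => ?_⟩
  rw [(mem_filter.1 (hB hi)).2, (mem_filter.1 (hC hj)).2]
  decide

lemma le_bernoulliProb_ne_and_ne_negB {w : KSet n k → ℝ} (hw : ∀ e, w e ∈ Set.Icc (0 : ℝ) 1)
    {σ : Fin n → Bool} (hσ : balanced σ) {est : (KSet n k → Bool) → Fin n → Bool}
    (hest : isTruncMax est) {B C : Finset (Fin n)} (hBC : ∀ i ∈ B, ∀ j ∈ C, σ i ≠ σ j) {π κ : ℝ}
    (hκ : 2 * κ ≤ 1)
    (hπ : ∀ v ∈ B ∪ C, π ≤ bernoulliProb w fun E => weightedCount (soloGain σ (B ∪ C) v) E < 0)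
    (hclean : ∀ v ∈ B ∪ C, ∑ e with Collides (B ∪ C) v e, w e ≤ κ) :
    (1 - 2 * κ) * (1 - Real.exp (-(#B * π)) - Real.exp (-(#C * π))) ≤
      bernoulliProb w fun E => est E ≠ σ ∧ est E ≠ negB σ := by
  refine (le_bernoulliProb_exists_soloGain_neg_and_clean hw σ subset_union_left subset_union_right
    hκ hπ hclean).trans (bernoulliProb_mono hw ?_)
  rintro E ⟨⟨i, j⟩, ⟨hi, hj⟩, ⟨hgi, hgj⟩, hEi, hEj⟩
  exact ne_and_ne_negB_of_clean hσ hest (mem_union_right B hj) (hBC i hi j hj) hEi hEj hgi hgj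

lemma exp_neg_mul_exp_le {r δ x : ℝ} (hr : Real.exp ((1 - δ / 2) * x) ≤ r) :
    Real.exp (-(r * Real.exp (-((1 - δ) * x)))) ≤ Real.exp (-Real.exp (δ / 2 * x)) := by
  refine Real.exp_le_exp.2 (neg_le_neg ?_)
  calc Real.exp (δ / 2 * x) = Real.exp ((1 - δ / 2) * x) * Real.exp (-((1 - δ) * x)) := by
        rw [← Real.exp_add]
        ring_nf
    _ ≤ r * Real.exp (-((1 - δ) * x)) := mul_le_mul_of_nonneg_right hr (Real.exp_pos _).le

theorem eventually_one_sub_le_bernoulliProb_ne_and_ne_negB (hk : 2 ≤ k) (hβ : 0 < β) (hβα : β < α)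
    (hI : I2def k α β < 1) {η : ℝ} (hη : 0 < η) :
    ∀ᶠ m : ℕ in atTop, ∀ σ : Fin (2 * m) → Bool, balanced σ →
      ∀ est : (KSet (2 * m) k → Bool) → Fin (2 * m) → Bool, isTruncMax est →
        1 - η ≤ bernoulliProb (edgeWeight k α β σ) fun E => est E ≠ σ ∧ est E ≠ negB σ := by
  obtain ⟨δ, ε, hδ, hε, htail⟩ := exists_exp_le_bernoulliProb_soloGain_neg hk hβ hβα hI
  obtain ⟨r, hexp, hr⟩ := exists_block_size (half_pos hδ)
  set κ : ℕ → ℝ := fun m =>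
    2 * (α * (k - 1)) * (r (2 * m) * (Real.log (2 * m : ℕ) / ((2 * m : ℕ) - 1)))
  set ρ : ℕ → ℝ := fun m => Real.exp (-Real.exp (δ / 2 * Real.log (2 * m : ℕ)))
  have hκ : Tendsto κ atTop (nhds 0) := by
    rw [← mul_zero (2 * (α * (k - 1) : ℝ))]
    exact (hr.comp tendsto_two_mul_atTop).const_mul (2 * (α * (k - 1)))
  have hρ : Tendsto ρ atTop (nhds 0) := Real.tendsto_exp_neg_atTop_nhds_zero.comp
    (Real.tendsto_exp_atTop.comp (tendsto_log_two_mul.const_mul_atTop (half_pos hδ)))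
  have hlim : Tendsto (fun m => (1 - 2 * κ m) * (1 - 2 * ρ m)) atTop (nhds 1) := by
    simpa using ((hκ.const_mul 2).const_sub 1).mul ((hρ.const_mul 2).const_sub 1)
  filter_upwards [htail, hlim.eventually_const_le (sub_lt_self 1 hη),
    hκ.eventually_le_const (half_pos one_pos), eventually_ge_atTop k,
    tendsto_two_mul_atTop.eventually (eventually_natCast_le_of_tendsto hr (half_pos one_pos)),
    tendsto_two_mul_atTop.eventually (eventually_natCast_le_of_tendsto hr (half_pos hε)),
    eventually_edgeWeight_mem_Icc hk hβ.le hβα.le one_pos]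
    with m htail hlim hκ hkm hrm hrε hw σ hσ est hest
  obtain ⟨B, C, hB, hC, hBC⟩ := exists_blocks hσ (r := r (2 * m)) (by
    push_cast at hrm
    exact_mod_cast (show (r (2 * m) : ℝ) ≤ m by linarith))
  have hcard : (#(B ∪ C) : ℝ) ≤ 2 * r (2 * m) := by
    exact_mod_cast (card_union_le B C).trans_eq (by omega)
  have hclean : ∀ v ∈ B ∪ C, ∑ e with Collides (B ∪ C) v e, edgeWeight k α β σ e ≤ κ m := by
    intro v _
    refine (sum_edgeWeight_collides_le hk hβ.le hβα.le (by omega) σ v (B ∪ C)).trans ?_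
    refine (mul_le_mul_of_nonneg_right hcard ?_).trans_eq (by simp only [κ]; ring)
    rw [← pParam_mul_choose hk α (by omega)]
    exact mul_nonneg (pParam_nonneg (hβ.trans hβα).le _) (Nat.cast_nonneg _)
  have hfail := le_bernoulliProb_ne_and_ne_negB (hw σ) hσ hest hBC (by linarith)
    (fun v _ => htail σ (B ∪ C) hσ (by linarith) v) hclean
  rw [hB, hC] at hfail
  have hρm := exp_neg_mul_exp_le (hexp (2 * m))
  refine hlim.trans (le_trans (mul_le_mul_of_nonneg_left ?_ (by linarith)) hfail)
  simp only [ρ]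
  linarith

end Failure

/-! ### Averaging over the labels -/

section Average

variable {n k : ℕ} {α β : ℝ}

lemma exists_balanced (m : ℕ) : ∃ σ : Fin (2 * m) → Bool, balanced σ := by
  obtain ⟨S, -, hS⟩ := exists_subset_card_eq (s := (univ : Finset (Fin (2 * m)))) (n := m)
    (by rw [card_univ, Fintype.card_fin]; omega)
  exact ⟨fun i => decide (i ∈ S), by simp [balanced, hS]⟩

lemma sigProb_nonneg (σ : Fin n → Bool) : 0 ≤ sigProb n σ := by
  unfold sigProb
  split_ifs <;> positivity

lemma sum_sigProb (m : ℕ) : ∑ σ, sigProb (2 * m) σ = 1 := by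
  obtain ⟨σ, hσ⟩ := exists_balanced m
  have hcard : (#{τ : Fin (2 * m) → Bool | balanced τ} : ℝ) ≠ 0 :=
    Nat.cast_ne_zero.2 (card_ne_zero_of_mem (mem_filter.2 ⟨mem_univ σ, hσ⟩))
  simp only [sigProb]
  rw [← sum_filter, sum_const, nsmul_eq_mul, mul_one_div_cancel hcard]

lemma prEvent_eq_sum_bernoulliProb (P : (Fin n → Bool) → (KSet n k → Bool) → Prop) :
    prEvent n k (pParam k α n) (pParam k β n) P =
      ∑ σ, sigProb n σ * bernoulliProb (edgeWeight k α β σ) (P σ) := by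
  have hweight : ∀ σ (E : KSet n k → Bool), hypProb (pParam k α n) (pParam k β n) σ E =
      bernoulliWeight (edgeWeight k α β σ) E := fun _ _ => rfl
  simp only [prEvent, bernoulliProb, bernoulliExp, mul_sum, hweight, mul_assoc]
  congr!

theorem tendsto_prEvent_one (hk : 2 ≤ k) (hβ : 0 ≤ β) (hβα : β ≤ α)
    {P : (m : ℕ) → (Fin (2 * m) → Bool) → (KSet (2 * m) k → Bool) → Prop}
    (h : ∀ η : ℝ, 0 < η → ∀ᶠ m : ℕ in atTop, ∀ σ, balanced σ →
      1 - η ≤ bernoulliProb (edgeWeight k α β σ) (P m σ)) :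
    Tendsto (fun m => prEvent (2 * m) k (pParam k α (2 * m)) (pParam k β (2 * m)) (P m)) atTop
      (nhds 1) := by
  refine tendsto_order.2 ⟨fun a ha => ?_, fun a ha => ?_⟩
  · filter_upwards [h ((1 - a) / 2) (by linarith)] with m hm
    have hlower : ∑ σ, sigProb (2 * m) σ * (1 - (1 - a) / 2) ≤
        ∑ σ, sigProb (2 * m) σ * bernoulliProb (edgeWeight k α β σ) (P m σ) := by
      refine sum_le_sum fun σ _ => ?_
      by_cases hσ : balanced σ
      · exact mul_le_mul_of_nonneg_left (hm σ hσ) (sigProb_nonneg σ)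
      · simp [sigProb, hσ]
    rw [← sum_mul, sum_sigProb, ← prEvent_eq_sum_bernoulliProb] at hlower
    linarith
  · filter_upwards [eventually_edgeWeight_mem_Icc hk hβ hβα one_pos] with m hw
    have hupper : ∑ σ, sigProb (2 * m) σ * bernoulliProb (edgeWeight k α β σ) (P m σ) ≤
        ∑ σ, sigProb (2 * m) σ := sum_le_sum fun σ _ =>
      mul_le_of_le_one_right (sigProb_nonneg σ) (bernoulliProb_le_one (hw σ) _)
    rw [sum_sigProb, ← prEvent_eq_sum_bernoulliProb] at hupper
    linarith

end Average

/-- If `I₂(α,β) < 1` then `σ̂_trunc` fails with probability `1 - o(1)`;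
if `I₂(α,β) > 1` then `σ̂_trunc ∈ {σ, -σ}` with probability `1 - o(1)`. -/
theorem trunc_threshold (k : ℕ) (hk : 2 ≤ k) (α β : ℝ) (hβ : 0 < β) (hαβ : β < α) :
    (I2def k α β < 1 →
      ∀ est : (m : ℕ) → (KSet (2 * m) k → Bool) → (Fin (2 * m) → Bool),
        (∀ m : ℕ, isTruncMax (est m)) →
        Tendsto (fun m : ℕ =>
            prEvent (2 * m) k (pParam k α (2 * m)) (pParam k β (2 * m))
              (fun σ E => est m E ≠ σ ∧ est m E ≠ negB σ))
          atTop (nhds 1)) ∧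
    (1 < I2def k α β →
      ∀ est : (m : ℕ) → (KSet (2 * m) k → Bool) → (Fin (2 * m) → Bool),
        (∀ m : ℕ, isTruncMax (est m)) →
        Tendsto (fun m : ℕ =>
            prEvent (2 * m) k (pParam k α (2 * m)) (pParam k β (2 * m))
              (fun σ E => est m E = σ ∨ est m E = negB σ))
          atTop (nhds 1)) := by
  refine ⟨fun hI est hest => ?_, fun hI est hest => ?_⟩
  · refine tendsto_prEvent_one hk hβ.le hαβ.le
      (P := fun m σ E => est m E ≠ σ ∧ est m E ≠ negB σ) fun η hη => ?_
    filter_upwards [eventually_one_sub_le_bernoulliProb_ne_and_ne_negB hk hβ hαβ hI hη]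
      with m hm σ hσ
    exact hm σ hσ (est m) (hest m)
  · refine tendsto_prEvent_one hk hβ.le hαβ.le
      (P := fun m σ E => est m E = σ ∨ est m E = negB σ) fun η hη => ?_
    filter_upwards [eventually_one_sub_le_bernoulliProb_eq_or_eq_negB hk hβ.le hαβ hI hη]
      with m hm σ hσ
    exact hm σ hσ (est m) (hest m)
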